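/- (Theorem F, Second Matricial Quaternionic Nullstellensatz) For any quaternionic matrix polynomials P₁, …, P_m, Q ∈ M_n(ℍ[x₁, …, x_d]) the following are equivalent: (1) for every a ∈ ℍ^d and every vector v ∈ ℍ^n such that P₁(a)v = ⋯ = P_m(a)v = 0, one has Q(a)v = 0; (2) Q belongs to every real left ideal of M_n(ℍ[x₁, …, x_d]) that contains P₁, …, P_m. -/

import Mathlib

/-!
Writing quaternions in real coordinates, `ℍ[x₁, …, x_d]` and its matrix ring `B` become finite
algebras over the real polynomial ring `R` in `4 * d` variables. Let `J` be a real left ideal of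
`B` and `Q ∉ J`. Some multiple `s • Q` has a prime annihilator `p` modulo `J`; since `J` is real,
`R ⧸ p` is formally real and there is an `R`-linear map `B → R ⧸ p` which kills `J` but not `Q`.
By the Artin–Lang theorem the resulting nonzero element of `R ⧸ p` does not vanish at some real
zero of `p`, so at the corresponding `a ∈ ℍ^d` the matrix `Q(a)` lies outside the left ideal
`J(a)` of `M_n(ℍ)`, and such a left ideal is the intersection of the annihilators of vectors.
Conversely, the matrix polynomials whose value at `a` annihilates `v` form a real left ideal,
because `∑ (Aᵢ v)* (Aᵢ v)` is a sum of squared norms.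

The Artin–Lang theorem is obtained from the intermediate value property for polynomials alone, by
matching the sign tables of finite families closed under derivatives and remainders
(Cohen–Hörmander).
-/

local notation "ℍ" => Quaternion ℝ

/-- Auxiliary quaternion units. -/
def qI : ℍ := ⟨0,1,0,0⟩
def qJ : ℍ := ⟨0,0,1,0⟩
def qK : ℍ := ⟨0,0,0,1⟩

lemma quat_star_add_star (q : ℍ) :
    star q + star q = -(q + qI * q * qI + qJ * q * qJ + qK * q * qK) := by
  ext <;>
    simp [Quaternion.re_mul, Quaternion.imI_mul, Quaternion.imJ_mul,
      Quaternion.imK_mul] <;>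
    simp [qI, qJ, qK]

lemma quat_star_eq (q : ℍ) :
    star q = -(2⁻¹ : ℍ) * (q + qI * q * qI + qJ * q * qJ + qK * q * qK) := by
  have h : q + qI * q * qI + qJ * q * qJ + qK * q * qK = -(star q + star q) :=
    neg_eq_iff_eq_neg.mp (quat_star_add_star q).symm
  rw [h, neg_mul, mul_neg, neg_neg, ← two_mul, ← mul_assoc,
    inv_mul_cancel₀ (by
      intro h2
      have h3 : (2 : Quaternion ℝ).re = (0 : Quaternion ℝ).re := congrArg QuaternionAlgebra.re h2
      have h4 : (2 : ℝ) = 0 := h3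
      norm_num at h4 : (2:ℍ) ≠ 0), one_mul]

/-- The ring `ℍ[x₁,…,x_d]` of all polynomial functions from `ℍ^d` to `ℍ`: the subring of
the ring of all functions `ℍ^d → ℍ` generated by the constant functions and the coordinate
functions. -/
def HPoly (d : ℕ) : Subring ((Fin d → ℍ) → ℍ) :=
  Subring.closure
    ((Set.range fun c : ℍ => Function.const (Fin d → ℍ) c) ∪
      (Set.range fun i : Fin d => fun a : Fin d → ℍ => a i))

lemma star_mem_HPoly {d : ℕ} {f : (Fin d → ℍ) → ℍ} (hf : f ∈ HPoly d) :
    star f ∈ HPoly d := by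
  induction hf using Subring.closure_induction with
  | mem g hg =>
      rcases hg with ⟨c, rfl⟩ | ⟨i, rfl⟩
      · have : star (Function.const (Fin d → ℍ) c) = Function.const (Fin d → ℍ) (star c) :=
          funext fun a => rfl
        rw [this]
        exact Subring.subset_closure (Or.inl ⟨star c, rfl⟩)
      · have hX : (fun a : Fin d → ℍ => a i) ∈ HPoly d :=
          Subring.subset_closure (Or.inr ⟨i, rfl⟩)
        have hC : ∀ c : ℍ, Function.const (Fin d → ℍ) c ∈ HPoly d := fun c =>
          Subring.subset_closure (Or.inl ⟨c, rfl⟩)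
        have hstar : star (fun a : Fin d → ℍ => a i) =
            Function.const (Fin d → ℍ) (-(2⁻¹ : ℍ)) *
              ((fun a : Fin d → ℍ => a i) +
                Function.const (Fin d → ℍ) qI * (fun a : Fin d → ℍ => a i) *
                  Function.const (Fin d → ℍ) qI +
                Function.const (Fin d → ℍ) qJ * (fun a : Fin d → ℍ => a i) *
                  Function.const (Fin d → ℍ) qJ +
                Function.const (Fin d → ℍ) qK * (fun a : Fin d → ℍ => a i) *
                  Function.const (Fin d → ℍ) qK) :=
          funext fun a => quat_star_eq (a i)
        rw [hstar]
        exact mul_mem (hC _)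
          (add_mem (add_mem (add_mem hX (mul_mem (mul_mem (hC _) hX) (hC _)))
            (mul_mem (mul_mem (hC _) hX) (hC _))) (mul_mem (mul_mem (hC _) hX) (hC _)))
  | one => rw [star_one]; exact one_mem _
  | mul x y hx hy ihx ihy => rw [star_mul]; exact mul_mem ihy ihx
  | add x y hx hy ihx ihy => rw [star_add]; exact add_mem ihx ihy
  | neg x hx ihx => rw [star_neg]; exact neg_mem ihx
  | zero => rw [star_zero]; exact zero_mem _

noncomputable instance HPoly.instStarRing (d : ℕ) : StarRing (HPoly d) where
  star x := ⟨star x.1, star_mem_HPoly x.2⟩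
  star_involutive x := Subtype.ext (star_star x.1)
  star_mul x y := Subtype.ext (star_mul x.1 y.1)
  star_add x y := Subtype.ext (star_add x.1 y.1)

open Matrix

/-- A left ideal `I` of the matrix ring `Mₙ(A)` over a ring `A` with involution, equipped
with the conjugate-transpose involution `ᴴ`, is *real* if whenever
`(M 0)ᴴ * M 0 + ⋯ + (M (k-1))ᴴ * M (k-1) ∈ I`, each `M i` lies in `I`.
(In Mathlib, `Ideal` means left ideal.) -/
def Ideal.IsRealLeftIdealH {A : Type*} [Ring A] [StarRing A] {n : ℕ}
    (I : Ideal (Matrix (Fin n) (Fin n) A)) : Prop :=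
  ∀ (k : ℕ) (M : Fin k → Matrix (Fin n) (Fin n) A),
    (∑ i, (M i)ᴴ * M i) ∈ I → ∀ i, M i ∈ I

/-- Entrywise evaluation of a matrix of quaternionic polynomial functions at `a ∈ ℍ^d`. -/
def evalMatH {d n : ℕ} (a : Fin d → ℍ) (P : Matrix (Fin n) (Fin n) (HPoly d)) :
    Matrix (Fin n) (Fin n) ℍ :=
  fun r s => (P r s : (Fin d → ℍ) → ℍ) a

section PolynomialIVT

open Polynomial

/-- The intermediate value property for polynomials over an ordered field, in the sign-change form;
among ordered fields it characterises the real closed ones. -/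
def PolynomialIVT (K : Type*) [Field K] [LinearOrder K] : Prop :=
  ∀ (p : K[X]) (a b : K), a < b → p.eval a * p.eval b < 0 → ∃ c ∈ Set.Ioo a b, p.eval c = 0

lemma polynomialIVT_real : PolynomialIVT ℝ := by
  intro p a b hab hsign
  have hcont : ContinuousOn (fun x ↦ p.eval x) (Set.Icc a b) := p.continuous.continuousOn
  rcases mul_neg_iff.1 hsign with ⟨ha, hb⟩ | ⟨ha, hb⟩
  · exact intermediate_value_Ioo' hab.le hcont ⟨hb, ha⟩
  · exact intermediate_value_Ioo hab.le hcont ⟨ha, hb⟩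

variable {K : Type*} [Field K]

lemma exists_eq_pow_mul_pow_mul_of_roots {p : K[X]} (hp : p ≠ 0) {a b : K} (hab : a ≠ b)
    (ha : p.eval a = 0) (hb : p.eval b = 0) :
    ∃ (m k : ℕ) (q : K[X]), p = (X - C a) ^ (m + 1) * ((X - C b) ^ (k + 1) * q) ∧
      q.eval a ≠ 0 ∧ q.eval b ≠ 0 := by
  obtain ⟨q₁, hpq₁, hq₁⟩ := exists_eq_pow_rootMultiplicity_mul_and_not_dvd p hp a
  have hq₁0 : q₁ ≠ 0 := by rintro rfl; exact hq₁ (dvd_zero _)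
  obtain ⟨q, hq₁q, hq⟩ := exists_eq_pow_rootMultiplicity_mul_and_not_dvd q₁ hq₁0 b
  have hq₁b : q₁.eval b = 0 := by
    rw [hpq₁, eval_mul, eval_pow, eval_sub, eval_X, eval_C] at hb
    exact (mul_eq_zero.1 hb).resolve_left (pow_ne_zero _ (sub_ne_zero.2 hab.symm))
  obtain ⟨m, hm⟩ := Nat.exists_eq_add_one.2 ((rootMultiplicity_pos hp).2 ha)
  obtain ⟨k, hk⟩ := Nat.exists_eq_add_one.2 ((rootMultiplicity_pos hq₁0).2 hq₁b)
  refine ⟨m, k, q, by rw [← hm, ← hk, ← hq₁q, ← hpq₁], fun h ↦ hq₁ ?_, fun h ↦ hq ?_⟩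
  · rw [hq₁q]
    exact (dvd_iff_isRoot.2 h).mul_left _
  · exact dvd_iff_isRoot.2 h

variable [LinearOrder K] [IsStrictOrderedRing K]

namespace PolynomialIVT

lemma exists_derivative_eq_zero_of_consecutive_roots (hK : PolynomialIVT K) {p : K[X]} (hp : p ≠ 0)
    {a b : K} (hab : a < b) (ha : p.eval a = 0) (hb : p.eval b = 0)
    (hne : ∀ x ∈ Set.Ioo a b, p.eval x ≠ 0) :
    ∃ c ∈ Set.Ioo a b, p.derivative.eval c = 0 := by
  obtain ⟨m, k, q, rfl, hqa, hqb⟩ := exists_eq_pow_mul_pow_mul_of_roots hp hab.ne ha hb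
  have hq : 0 < q.eval a * q.eval b := by
    refine lt_of_le_of_ne (not_lt.1 fun h ↦ ?_) (mul_ne_zero hqa hqb).symm
    obtain ⟨c, hc, hc0⟩ := hK q a b hab h
    exact hne c hc (by rw [eval_mul, eval_mul, hc0, mul_zero, mul_zero])
  -- The cofactor of `(X - a) ^ m * (X - b) ^ k` in the derivative changes sign on `(a, b)`.
  let g : K[X] := C ((m : K) + 1) * (X - C b) * q + C ((k : K) + 1) * (X - C a) * q
    + (X - C a) * (X - C b) * derivative q
  have hderiv : derivative ((X - C a) ^ (m + 1) * ((X - C b) ^ (k + 1) * q)) =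
      (X - C a) ^ m * (X - C b) ^ k * g := by
    simp only [g, derivative_mul, derivative_X_sub_C_pow, Nat.cast_add, Nat.cast_one,
      Nat.add_sub_cancel, C_add, C_1, C_eq_natCast]
    ring
  have hg : g.eval a * g.eval b < 0 := by
    have hga : g.eval a = ((m : K) + 1) * (a - b) * q.eval a := by simp [g]
    have hgb : g.eval b = ((k : K) + 1) * (b - a) * q.eval b := by simp [g]
    have hpos : 0 < ((m : K) + 1) * ((k : K) + 1) * (b - a) ^ 2 * (q.eval a * q.eval b) := by
      have := sub_pos.2 hab
      positivity
    rw [hga, hgb]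
    linarith
  obtain ⟨c, hc, hc0⟩ := hK g a b hab hg
  exact ⟨c, hc, by rw [hderiv, eval_mul, hc0, mul_zero]⟩

lemma rolle (hK : PolynomialIVT K) (p : K[X]) {a b : K} (hab : a < b)
    (ha : p.eval a = 0) (hb : p.eval b = 0) :
    ∃ c ∈ Set.Ioo a b, p.derivative.eval c = 0 := by
  rcases eq_or_ne p 0 with rfl | hp
  · obtain ⟨c, hc⟩ := exists_between hab
    exact ⟨c, hc, by simp⟩
  have hfin : {x | a < x ∧ p.eval x = 0}.Finite :=
    (finite_setOfPred_isRoot hp).subset fun x hx ↦ hx.2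
  obtain ⟨b', ⟨hab', hb'⟩, hmin⟩ := hfin.exists_minimal ⟨b, hab, hb⟩
  have hb'b : b' ≤ b := not_lt.1 fun h ↦ h.not_ge (hmin ⟨hab, hb⟩ h.le)
  obtain ⟨c, hc, hc0⟩ := hK.exists_derivative_eq_zero_of_consecutive_roots hp hab' ha hb'
    fun x hx h0 ↦ hx.2.not_ge (hmin ⟨hx.1, h0⟩ hx.2.le)
  exact ⟨c, ⟨hc.1, hc.2.trans_le hb'b⟩, hc0⟩

lemma mean_value (hK : PolynomialIVT K) (p : K[X]) {a b : K} (hab : a < b) :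
    ∃ c ∈ Set.Ioo a b, p.eval b - p.eval a = p.derivative.eval c * (b - a) := by
  have hba : b - a ≠ 0 := (sub_pos.2 hab).ne'
  let m : K := (p.eval b - p.eval a) / (b - a)
  obtain ⟨c, hc, hc0⟩ := hK.rolle (p - C (p.eval a) - C m * (X - C a)) hab
    (by simp) (by simp [m, hba])
  have hm : p.derivative.eval c = m := by simpa [sub_eq_zero] using hc0
  exact ⟨c, hc, by rw [hm, div_mul_cancel₀ _ hba]⟩

lemma strictMonoOn_of_derivative_pos (hK : PolynomialIVT K) {p : K[X]} {a b : K}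
    (hp : ∀ x ∈ Set.Ioo a b, 0 < p.derivative.eval x) :
    StrictMonoOn (fun x ↦ p.eval x) (Set.Icc a b) := by
  intro x hx y hy hxy
  obtain ⟨c, hc, hc'⟩ := hK.mean_value p hxy
  have := mul_pos (hp c ⟨hx.1.trans_lt hc.1, hc.2.trans_le hy.2⟩) (sub_pos.2 hxy)
  exact sub_pos.1 (hc' ▸ this)

lemma eval_pos_or_eval_neg (hK : PolynomialIVT K) {p : K[X]} {a b : K}
    (hp : ∀ x ∈ Set.Ioo a b, p.eval x ≠ 0) :
    (∀ x ∈ Set.Ioo a b, 0 < p.eval x) ∨ ∀ x ∈ Set.Ioo a b, p.eval x < 0 := by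
  by_contra! h
  obtain ⟨⟨x, hx, hpx⟩, y, hy, hpy⟩ := h
  replace hpx := hpx.lt_of_ne (hp x hx)
  replace hpy := hpy.lt_of_ne' (hp y hy)
  rcases lt_trichotomy x y with hxy | rfl | hxy
  · obtain ⟨c, hc, hc0⟩ := hK p x y hxy (mul_neg_of_neg_of_pos hpx hpy)
    exact hp c ⟨hx.1.trans hc.1, hc.2.trans hy.2⟩ hc0
  · exact hpx.not_gt hpy
  · obtain ⟨c, hc, hc0⟩ := hK p y x hxy (mul_neg_of_pos_of_neg hpy hpx)
    exact hp c ⟨hy.1.trans hc.1, hc.2.trans hx.2⟩ hc0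

lemma strictMonoOn_or_strictAntiOn (hK : PolynomialIVT K) {p : K[X]} {a b : K}
    (hp : ∀ x ∈ Set.Ioo a b, p.derivative.eval x ≠ 0) :
    StrictMonoOn (fun x ↦ p.eval x) (Set.Icc a b) ∨
      StrictAntiOn (fun x ↦ p.eval x) (Set.Icc a b) := by
  refine (hK.eval_pos_or_eval_neg hp).imp hK.strictMonoOn_of_derivative_pos fun hneg ↦ ?_
  have := hK.strictMonoOn_of_derivative_pos (p := -p) (a := a) (b := b)
    fun x hx ↦ by simpa using hneg x hx
  simpa using this.neg

lemma sign_eval_of_not_sign_change (hK : PolynomialIVT K) {p : K[X]} {a b : K}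
    (hp : ∀ x ∈ Set.Ioo a b, p.derivative.eval x ≠ 0) (hsign : ¬ p.eval a * p.eval b < 0)
    {x : K} (hx : x ∈ Set.Ioo a b) :
    SignType.sign (p.eval x) =
      if SignType.sign (p.eval a) = 0 then SignType.sign (p.eval b)
      else SignType.sign (p.eval a) := by
  have ha : a ∈ Set.Icc a b := Set.left_mem_Icc.2 (hx.1.trans hx.2).le
  have hb : b ∈ Set.Icc a b := Set.right_mem_Icc.2 (hx.1.trans hx.2).le
  have hx' := Set.Ioo_subset_Icc_self hx
  rw [mul_neg_iff] at hsign
  rcases hK.strictMonoOn_or_strictAntiOn hp with hmono | hanti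
  · have hax : p.eval a < p.eval x := hmono ha hx' hx.1
    have hxb : p.eval x < p.eval b := hmono hx' hb hx.2
    grind [sign_pos, sign_neg, sign_eq_zero_iff]
  · have hax : p.eval x < p.eval a := hanti ha hx' hx.1
    have hxb : p.eval b < p.eval x := hanti hx' hb hx.2
    grind [sign_pos, sign_neg, sign_eq_zero_iff]

lemma exists_root_of_sign_change (hK : PolynomialIVT K) {p : K[X]} {a b : K} (hab : a < b)
    (hp : ∀ x ∈ Set.Ioo a b, p.derivative.eval x ≠ 0) (hsign : p.eval a * p.eval b < 0) :
    ∃ e ∈ Set.Ioo a b, p.eval e = 0 ∧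
      (∀ x ∈ Set.Ioo a e, SignType.sign (p.eval x) = SignType.sign (p.eval a)) ∧
      ∀ x ∈ Set.Ioo e b, SignType.sign (p.eval x) = SignType.sign (p.eval b) := by
  obtain ⟨e, he, he0⟩ := hK p a b hab hsign
  refine ⟨e, he, he0, fun x hx ↦ ?_, fun x hx ↦ ?_⟩
  · have ha : SignType.sign (p.eval a) ≠ 0 := by
      rw [Ne, sign_eq_zero_iff]
      exact left_ne_zero_of_mul hsign.ne
    rw [hK.sign_eval_of_not_sign_change (fun y hy ↦ hp y ⟨hy.1, hy.2.trans he.2⟩)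
      (by simp [he0]) hx, if_neg ha]
  · rw [hK.sign_eval_of_not_sign_change (fun y hy ↦ hp y ⟨he.1.trans hy.1, hy.2⟩)
      (by simp [he0]) hx, if_pos (by rw [he0, sign_zero])]

lemma isSquare_of_pos (hK : PolynomialIVT K) {c : K} (hc : 0 < c) : IsSquare c := by
  have hsign : (X ^ 2 - C c : K[X]).eval 0 * (X ^ 2 - C c : K[X]).eval (c + 1) < 0 := by
    simp only [eval_sub, eval_pow, eval_X, eval_C]
    nlinarith [sq_nonneg c]
  obtain ⟨r, -, hr⟩ := hK _ 0 (c + 1) (by linarith) hsign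
  exact ⟨r, by simpa [sub_eq_zero, sq, eq_comm] using hr⟩

lemma sign_map (hK : PolynomialIVT K) {L : Type*} [Field L] [LinearOrder L] [IsStrictOrderedRing L]
    (j : K →+* L) (c : K) : SignType.sign (j c) = SignType.sign c := by
  have hpos {c : K} (hc : 0 < c) : 0 < j c :=
    ((hK.isSquare_of_pos hc).map j).nonneg.lt_of_ne' ((map_ne_zero j).2 hc.ne')
  rcases lt_trichotomy c 0 with hc | rfl | hc
  · rw [sign_neg hc, sign_neg (neg_pos.1 (map_neg j c ▸ hpos (neg_pos.2 hc)))]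
  · rw [map_zero, sign_zero, sign_zero]
  · rw [sign_pos hc, sign_pos (hpos hc)]

end PolynomialIVT

lemma tendsto_eval_atTop_atTop : ∀ (p : K[X]), 0 < p.natDegree → 0 < p.leadingCoeff →
    Filter.Tendsto (fun x ↦ p.eval x) Filter.atTop Filter.atTop := by
  intro p
  induction h : p.natDegree generalizing p with
  | zero => exact fun h0 ↦ absurd h0 (lt_irrefl 0)
  | succ n ih =>
    intro _ hlc
    have heval (x : K) : p.eval x = x * p.divX.eval x + p.coeff 0 := by
      conv_lhs => rw [← X_mul_divX_add p, eval_add, eval_mul, eval_X, eval_C]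
    have hdeg : p.divX.natDegree = n := by rw [natDegree_divX_eq_natDegree_tsub_one, h]; rfl
    have hlc' : 0 < p.divX.leadingCoeff := by
      rwa [leadingCoeff, hdeg, coeff_divX, ← h]
    simp only [heval]
    refine Filter.tendsto_atTop_add_const_right _ _ ?_
    rcases Nat.eq_zero_or_pos n with rfl | hn
    · obtain ⟨c, hc⟩ := natDegree_eq_zero.1 hdeg
      simp only [← hc, leadingCoeff_C, eval_C] at hlc' ⊢
      exact Filter.tendsto_id.atTop_mul_const hlc'
    · exact Filter.tendsto_id.atTop_mul_atTop₀ (ih p.divX hdeg hn hlc')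

lemma eventually_sign_eval_atTop (p : K[X]) :
    ∀ᶠ x in Filter.atTop, SignType.sign (p.eval x) = SignType.sign p.leadingCoeff := by
  rcases Nat.eq_zero_or_pos p.natDegree with hdeg | hdeg
  · obtain ⟨c, rfl⟩ := natDegree_eq_zero.1 hdeg
    simp
  have hp : p.leadingCoeff ≠ 0 := leadingCoeff_ne_zero.2 (ne_zero_of_natDegree_gt hdeg)
  rcases hp.lt_or_gt with hneg | hpos
  · have := tendsto_eval_atTop_atTop (-p) (by rwa [natDegree_neg]) (by simpa using hneg)
    filter_upwards [this.eventually_gt_atTop 0] with x hx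
    rw [sign_neg hneg, sign_neg (by simpa using hx)]
  · filter_upwards [(tendsto_eval_atTop_atTop p hdeg hpos).eventually_gt_atTop 0] with x hx
    rw [sign_pos hpos, sign_pos hx]

lemma eventually_sign_eval_neg_atTop (p : K[X]) :
    ∀ᶠ x in Filter.atTop, SignType.sign (p.eval (-x)) =
      SignType.sign p.leadingCoeff * (-1) ^ p.natDegree := by
  filter_upwards [eventually_sign_eval_atTop (p.comp (-X))] with x hx
  simpa [eval_comp, sign_mul, sign_pow, mul_comm] using hx

end PolynomialIVT

section FiniteClosure

variable {α : Type*} {g : α → α → Set α}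

/-- Membership in the closure of `S` under the multivalued binary operation `g`. -/
inductive OpClosure (g : α → α → Set α) (S : Set α) : α → Prop
  | base {x : α} (hx : x ∈ S) : OpClosure g S x
  | op {p q x : α} (hp : OpClosure g S p) (hq : OpClosure g S q) (hx : x ∈ g p q) :
      OpClosure g S x

lemma OpClosure.finite {deg : α → ℕ} (hg : ∀ p q, (g p q).Finite)
    (hdeg : ∀ p q, ∀ x ∈ g p q, deg x < deg p ∧ deg x < deg q) {S : Set α} (hS : S.Finite) :
    {x | OpClosure g S x}.Finite := by
  obtain ⟨N, hN⟩ : ∃ N, ∀ x ∈ S, deg x ≤ N :=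
    (hS.image deg).bddAbove.imp fun N hN x hx ↦ hN ⟨x, hx, rfl⟩
  have hbound (x : α) (hx : OpClosure g S x) : deg x ≤ N := by
    induction hx with
    | base hx => exact hN _ hx
    | op _ _ hx ihp _ => exact (hdeg _ _ _ hx).1.le.trans ihp
  -- Only finitely many elements lie in the top `k` degrees, since they arise from higher ones.
  have htop (k : ℕ) : {x | OpClosure g S x ∧ N < deg x + k}.Finite := by
    induction k with
    | zero => exact Set.finite_empty.subset fun x hx ↦ (hbound x hx.1).not_gt hx.2
    | succ k ih =>
      refine (hS.union (ih.biUnion fun p _ ↦ ih.biUnion fun q _ ↦ hg p q)).subset ?_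
      rintro x ⟨hx, hxk⟩
      cases hx with
      | base hx => exact Or.inl hx
      | op hp hq hx =>
        have := hdeg _ _ _ hx
        exact Or.inr (Set.mem_biUnion ⟨hp, by omega⟩ (Set.mem_biUnion ⟨hq, by omega⟩ hx))
  exact (htop (N + 1)).subset fun x hx ↦ ⟨hx, by omega⟩

end FiniteClosure

section SignTransfer

open Polynomial

variable {A : Type*} [CommRing A]

lemma exists_leadingCoeff_pow_mul_eq (p : A[X]) {q : A[X]} (hq : 1 ≤ q.natDegree) :
    ∃ (e : ℕ) (u r : A[X]), C q.leadingCoeff ^ e * p = u * q + r ∧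
      r.natDegree < q.natDegree := by
  induction hn : p.natDegree using Nat.strong_induction_on generalizing p with
  | _ n ih =>
    subst hn
    rcases lt_or_ge p.natDegree q.natDegree with h | h
    · exact ⟨0, 0, p, by simp, h⟩
    have hlt := natDegree_cancelLeads_lt_of_natDegree_le_natDegree h (by omega)
    obtain ⟨e, u, r, hr, hrq⟩ := ih _ hlt _ rfl
    have hcancel : q.cancelLeads p = C q.leadingCoeff * p
        - C p.leadingCoeff * X ^ (p.natDegree - q.natDegree) * q := by
      simp [cancelLeads, Nat.sub_eq_zero_of_le h]
    rw [hcancel] at hr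
    exact ⟨e + 1, u + C q.leadingCoeff ^ e * (C p.leadingCoeff * X ^ (p.natDegree - q.natDegree)),
      r, by linear_combination hr, hrq⟩

lemma exists_leadingCoeff_even_pow_mul_eq (p : A[X]) {q : A[X]} (hq : 1 ≤ q.natDegree) :
    ∃ r : A[X], r.natDegree < q.natDegree ∧
      ∃ (e : ℕ) (u : A[X]), C q.leadingCoeff ^ (2 * e) * p = u * q + r := by
  obtain ⟨e, u, r, hr, hrq⟩ := exists_leadingCoeff_pow_mul_eq p hq
  refine ⟨C (q.leadingCoeff ^ e) * r, (natDegree_C_mul_le _ _).trans_lt hrq, e,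
    C q.leadingCoeff ^ e * u, ?_⟩
  rw [C_pow]
  linear_combination C q.leadingCoeff ^ e * hr

lemma natDegree_eraseLead_lt_of_pos {q : A[X]} (hq : 1 ≤ q.natDegree) :
    q.eraseLead.natDegree < q.natDegree := by
  have := eraseLead_natDegree_le q
  omega

lemma map_eraseLead_of_map_leadingCoeff_eq_zero {B : Type*} [Semiring B] {φ : A →+* B} {q : A[X]}
    (hq : φ q.leadingCoeff = 0) : q.eraseLead.map φ = q.map φ := by
  conv_rhs => rw [← eraseLead_add_C_mul_X_pow q, Polynomial.map_add, Polynomial.map_mul, map_C, hq,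
    C_0, zero_mul, add_zero]

/-- The closure condition of the Cohen–Hörmander algorithm: for a set of polynomials satisfying it,
the signs of the leading coefficients determine the sign behaviour of the whole set. Remainders are
pseudo-remainders, scaled by an even power so that the sign survives specialisation. -/
def CohenHormanderClosed (U : Set A[X]) : Prop :=
  ∀ p ∈ U, ∀ q ∈ U, 1 ≤ q.natDegree → q.natDegree ≤ p.natDegree →
    derivative q ∈ U ∧ q.eraseLead ∈ U ∧ ∃ r ∈ U, r.natDegree < q.natDegree ∧
      ∃ (e : ℕ) (u : A[X]), C q.leadingCoeff ^ (2 * e) * p = u * q + r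

lemma exists_finset_cohenHormanderClosed {S : Set A[X]} (hS : S.Finite) :
    ∃ U : Finset A[X], S ⊆ U ∧ CohenHormanderClosed (U : Set A[X]) := by
  choose! rem hlt hrem using
    fun (p q : A[X]) (hq : 1 ≤ q.natDegree) ↦ exists_leadingCoeff_even_pow_mul_eq p hq
  let g (p q : A[X]) : Set A[X] :=
    {r ∈ ({derivative q, q.eraseLead, rem p q} : Set A[X]) |
      1 ≤ q.natDegree ∧ q.natDegree ≤ p.natDegree}
  have hg (p q : A[X]) : (g p q).Finite := (Set.toFinite _).subset (Set.sep_subset _ _)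
  have hdeg (p q : A[X]) (r : A[X]) (hr : r ∈ g p q) :
      r.natDegree < p.natDegree ∧ r.natDegree < q.natDegree := by
    obtain ⟨hr, hq, hqp⟩ := hr
    suffices h : r.natDegree < q.natDegree from ⟨h.trans_le hqp, h⟩
    rcases hr with rfl | rfl | rfl
    · exact natDegree_derivative_lt (by omega)
    · exact natDegree_eraseLead_lt_of_pos hq
    · exact hlt p q hq
  have hU := OpClosure.finite hg hdeg hS
  refine ⟨hU.toFinset, fun x hx ↦ ?_, fun p hp q hq hq1 hqp ↦ ?_⟩
  · simpa using OpClosure.base hx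
  · simp only [Set.Finite.coe_toFinset, Set.mem_ofPred_eq] at hp hq ⊢
    exact ⟨.op hp hq ⟨.inl rfl, hq1, hqp⟩, .op hp hq ⟨.inr (.inl rfl), hq1, hqp⟩,
      rem p q, .op hp hq ⟨.inr (.inr rfl), hq1, hqp⟩, hlt p q hq1, hrem p q hq1⟩

variable {K : Type*} [Field K] [LinearOrder K]
variable {L : Type*} [Field L] [LinearOrder L]

/-- The sign at `x` of the polynomial `q` with coefficients specialised along `φ`. -/
noncomputable def signAt (φ : A →+* K) (q : A[X]) (x : K) : SignType :=
  SignType.sign ((q.map φ).eval x)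

lemma signAt_eq_zero_iff {φ : A →+* K} {q : A[X]} {x : K} :
    signAt φ q x = 0 ↔ (q.map φ).eval x = 0 :=
  sign_eq_zero_iff

lemma signAt_eraseLead {φ : A →+* K} {q : A[X]} (hq : φ q.leadingCoeff = 0) (x : K) :
    signAt φ q.eraseLead x = signAt φ q x := by
  rw [signAt, map_eraseLead_of_map_leadingCoeff_eq_zero hq, signAt]

/-- `SignMatch φ ψ F a b a' b'` says that the intervals `(a, b)` and `(a', b')` can be cut at
corresponding points so that on corresponding points and open pieces every `q ∈ F` has the same,
constant, sign. Every cut point is required to be a root of a member of `F` that keeps its degree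
under `φ`, so that pseudo-remainders can be used there. -/
inductive SignMatch (φ : A →+* K) (ψ : A →+* L) (F : Set A[X]) : K → K → L → L → Prop
  | single {a b : K} {a' b' : L} (h : a < b) (h' : a' < b')
      (hs : ∀ q ∈ F, ∀ x ∈ Set.Ioo a b, ∀ y ∈ Set.Ioo a' b', signAt φ q x = signAt ψ q y) :
      SignMatch φ ψ F a b a' b'
  | cons {a c b : K} {a' c' b' : L} (left : SignMatch φ ψ F a c a' c')
      (hs : ∀ q ∈ F, signAt φ q c = signAt ψ q c')
      (hroot : ∃ q ∈ F, (q.map φ).eval c = 0 ∧ φ q.leadingCoeff ≠ 0)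
      (right : SignMatch φ ψ F c b c' b') : SignMatch φ ψ F a b a' b'

variable {φ : A →+* K} {ψ : A →+* L} {F : Set A[X]} {a b : K} {a' b' : L}

lemma SignMatch.insert_of_forall (h : SignMatch φ ψ F a b a' b') {p : A[X]}
    (hp : ∀ x y, (∀ q ∈ F, signAt φ q x = signAt ψ q y) → signAt φ p x = signAt ψ p y) :
    SignMatch φ ψ (insert p F) a b a' b' := by
  induction h with
  | single h h' hs =>
    refine .single h h' (Set.forall_mem_insert.2 ⟨fun x hx y hy ↦ ?_, hs⟩)
    exact hp x y fun q hq ↦ hs q hq x hx y hy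
  | cons _ hs hroot _ ihl ihr =>
    obtain ⟨q, hq, hq0⟩ := hroot
    exact .cons ihl (Set.forall_mem_insert.2 ⟨hp _ _ hs, hs⟩) ⟨q, Or.inr hq, hq0⟩ ihr

lemma CohenHormanderClosed.natDegree_map_eq_and_sign_leadingCoeff_map_eq
    {U : Set A[X]} (hU : CohenHormanderClosed U)
    (hlc : ∀ q ∈ U, SignType.sign (φ q.leadingCoeff) = SignType.sign (ψ q.leadingCoeff))
    {q : A[X]} (hq : q ∈ U) :
    (q.map φ).natDegree = (q.map ψ).natDegree ∧
      SignType.sign (q.map φ).leadingCoeff = SignType.sign (q.map ψ).leadingCoeff := by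
  induction hn : q.natDegree using Nat.strong_induction_on generalizing q with
  | _ n ih =>
    subst hn
    have hlc0 : φ q.leadingCoeff = 0 ↔ ψ q.leadingCoeff = 0 := by
      rw [← sign_eq_zero_iff, hlc q hq, sign_eq_zero_iff]
    by_cases hφ : φ q.leadingCoeff = 0
    · have hψ := hlc0.1 hφ
      rw [← map_eraseLead_of_map_leadingCoeff_eq_zero hφ,
        ← map_eraseLead_of_map_leadingCoeff_eq_zero hψ]
      rcases Nat.eq_zero_or_pos q.natDegree with hdeg | hdeg
      · obtain ⟨c, rfl⟩ := natDegree_eq_zero.1 hdeg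
        simp
      · exact ih _ (natDegree_eraseLead_lt_of_pos hdeg) (hU q hq q hq hdeg le_rfl).2.1 rfl
    · have hψ := hlc0.not.1 hφ
      rw [natDegree_map_of_leadingCoeff_ne_zero φ hφ, natDegree_map_of_leadingCoeff_ne_zero ψ hψ,
        leadingCoeff_map_of_leadingCoeff_ne_zero φ hφ,
        leadingCoeff_map_of_leadingCoeff_ne_zero ψ hψ]
      exact ⟨rfl, hlc q hq⟩

variable [IsStrictOrderedRing L]

lemma SignMatch.exists_forall_signAt_eq (h : SignMatch φ ψ F a b a' b') {x : K}
    (hx : x ∈ Set.Ioo a b) : ∃ y, ∀ q ∈ F, signAt φ q x = signAt ψ q y := by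
  induction h with
  | single _ h' hs =>
    obtain ⟨y, hy⟩ := exists_between h'
    exact ⟨y, fun q hq ↦ hs q hq x hx y hy⟩
  | @cons _ c _ _ c' _ _ hs _ _ ihl ihr =>
    rcases lt_trichotomy x c with hxc | rfl | hxc
    · exact ihl ⟨hx.1, hxc⟩
    · exact ⟨c', hs⟩
    · exact ihr ⟨hxc, hx.2⟩

variable [IsStrictOrderedRing K]

lemma eval_ne_zero_of_signAt_eq (hab : a < b) (hab' : a' < b') {q : A[X]} (hq : q.map φ ≠ 0)
    (hs : ∀ x ∈ Set.Ioo a b, ∀ y ∈ Set.Ioo a' b', signAt φ q x = signAt ψ q y) :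
    (∀ x ∈ Set.Ioo a b, (q.map φ).eval x ≠ 0) ∧ ∀ y ∈ Set.Ioo a' b', (q.map ψ).eval y ≠ 0 := by
  obtain ⟨x₀, hx₀, hqx₀⟩ : ∃ x ∈ Set.Ioo a b, (q.map φ).eval x ≠ 0 := by
    by_contra! h
    exact hq (eq_zero_of_infinite_isRoot _ ((Set.Ioo_infinite hab).mono h))
  have hψ (y : L) (hy : y ∈ Set.Ioo a' b') : (q.map ψ).eval y ≠ 0 := by
    rwa [Ne, ← signAt_eq_zero_iff, ← hs x₀ hx₀ y hy, signAt_eq_zero_iff]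
  refine ⟨fun x hx ↦ ?_, hψ⟩
  obtain ⟨y, hy⟩ := exists_between hab'
  rw [Ne, ← signAt_eq_zero_iff, hs x hx y hy, signAt_eq_zero_iff]
  exact hψ y hy

lemma eval_mul_eval_neg_iff_signAt {q : A[X]} :
    (q.map φ).eval a * (q.map φ).eval b < 0 ↔ signAt φ q a * signAt φ q b = -1 := by
  rw [signAt, signAt, ← sign_mul, sign_eq_neg_one_iff]

lemma SignMatch.insert_of_single (hK : PolynomialIVT K) (hL : PolynomialIVT L) {p : A[X]}
    (hlc : φ p.leadingCoeff ≠ 0) (hdeg : 1 ≤ p.natDegree) (hder : derivative p ∈ F)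
    (hab : a < b) (hab' : a' < b')
    (hs : ∀ q ∈ F, ∀ x ∈ Set.Ioo a b, ∀ y ∈ Set.Ioo a' b', signAt φ q x = signAt ψ q y)
    (ha : signAt φ p a = signAt ψ p a') (hb : signAt φ p b = signAt ψ p b') :
    SignMatch φ ψ (insert p F) a b a' b' := by
  have hder0 : (derivative p).map φ ≠ 0 := by
    rw [← derivative_map, Ne, derivative_eq_zero, natDegree_map_of_leadingCoeff_ne_zero φ hlc]
    omega
  obtain ⟨hφ, hψ⟩ := eval_ne_zero_of_signAt_eq hab hab' hder0 (hs _ hder)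
  simp only [← derivative_map] at hφ hψ
  by_cases hsign : (p.map φ).eval a * (p.map φ).eval b < 0
  · have hsign' : (p.map ψ).eval a' * (p.map ψ).eval b' < 0 := by
      rwa [eval_mul_eval_neg_iff_signAt, ← ha, ← hb, ← eval_mul_eval_neg_iff_signAt]
    obtain ⟨e, he, he0, hleft, hright⟩ := hK.exists_root_of_sign_change hab hφ hsign
    obtain ⟨e', he', he0', hleft', hright'⟩ := hL.exists_root_of_sign_change hab' hψ hsign'
    refine .cons (.single he.1 he'.1 (Set.forall_mem_insert.2 ⟨fun x hx y hy ↦ ?_, ?_⟩))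
      (Set.forall_mem_insert.2 ⟨?_, fun q hq ↦ hs q hq e he e' he'⟩) ⟨p, .inl rfl, he0, hlc⟩
      (.single he.2 he'.2 (Set.forall_mem_insert.2 ⟨fun x hx y hy ↦ ?_, ?_⟩))
    · exact (hleft x hx).trans (ha.trans (hleft' y hy).symm)
    · exact fun q hq x hx y hy ↦ hs q hq x ⟨hx.1, hx.2.trans he.2⟩ y ⟨hy.1, hy.2.trans he'.2⟩
    · rw [signAt_eq_zero_iff.2 he0, signAt_eq_zero_iff.2 he0']
    · exact (hright x hx).trans (hb.trans (hright' y hy).symm)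
    · exact fun q hq x hx y hy ↦ hs q hq x ⟨he.1.trans hx.1, hx.2⟩ y ⟨he'.1.trans hy.1, hy.2⟩
  · have hsign' : ¬ (p.map ψ).eval a' * (p.map ψ).eval b' < 0 := by
      rwa [eval_mul_eval_neg_iff_signAt, ← ha, ← hb, ← eval_mul_eval_neg_iff_signAt]
    refine .single hab hab' (Set.forall_mem_insert.2 ⟨fun x hx y hy ↦ ?_, hs⟩)
    have hx' := hK.sign_eval_of_not_sign_change hφ hsign hx
    have hy' := hL.sign_eval_of_not_sign_change hψ hsign' hy
    simp only [← signAt.eq_def] at hx' hy'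
    rw [hx', hy', ha, hb]

lemma signAt_eq_of_root {p q r u : A[X]} {e : ℕ}
    (hr : C q.leadingCoeff ^ (2 * e) * p = u * q + r) (hlc : φ q.leadingCoeff ≠ 0) {c : K}
    (hq : (q.map φ).eval c = 0) : signAt φ p c = signAt φ r c := by
  have heval := congrArg (fun f ↦ (f.map φ).eval c) hr
  simp only [Polynomial.map_mul, Polynomial.map_pow, map_C, Polynomial.map_add, eval_mul,
    eval_pow, eval_C, eval_add, hq, mul_zero, zero_add] at heval
  have hpos : 0 < φ q.leadingCoeff ^ (2 * e) := by rw [pow_mul]; positivity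
  rw [signAt, signAt, ← heval, sign_mul, sign_pos hpos, one_mul]

lemma SignMatch.insert (hK : PolynomialIVT K) (hL : PolynomialIVT L)
    (h : SignMatch φ ψ F a b a' b') {p : A[X]} (hlc : φ p.leadingCoeff ≠ 0)
    (hdeg : 1 ≤ p.natDegree) (hder : derivative p ∈ F)
    (hF : ∀ q ∈ F, φ q.leadingCoeff ≠ 0 → ψ q.leadingCoeff ≠ 0)
    (hrem : ∀ q ∈ F, 1 ≤ q.natDegree → ∃ r ∈ F, ∃ (e : ℕ) (u : A[X]),
      C q.leadingCoeff ^ (2 * e) * p = u * q + r)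
    (ha : signAt φ p a = signAt ψ p a') (hb : signAt φ p b = signAt ψ p b') :
    SignMatch φ ψ (insert p F) a b a' b' := by
  induction h with
  | single h h' hs => exact .insert_of_single hK hL hlc hdeg hder h h' hs ha hb
  | @cons _ c _ _ c' _ _ hs hroot _ ihl ihr =>
    obtain ⟨q, hq, hq0, hqlc⟩ := hroot
    have hc : signAt φ p c = signAt ψ p c' := by
      have hqdeg : 1 ≤ q.natDegree := by
        by_contra! h0
        rw [leadingCoeff, Nat.lt_one_iff.1 h0] at hqlc
        rw [eq_C_of_natDegree_eq_zero (Nat.lt_one_iff.1 h0), map_C, eval_C] at hq0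
        exact hqlc hq0
      have hq0' : (q.map ψ).eval c' = 0 := by
        rwa [← signAt_eq_zero_iff, ← hs q hq, signAt_eq_zero_iff]
      obtain ⟨r, hr, e, u, hrem⟩ := hrem q hq hqdeg
      rw [signAt_eq_of_root hrem hqlc hq0, signAt_eq_of_root hrem (hF q hq hqlc) hq0', hs r hr]
    exact .cons (ihl ha hc) (Set.forall_mem_insert.2 ⟨hc, hs⟩) ⟨q, .inr hq, hq0, hqlc⟩ (ihr hc hb)

namespace CohenHormanderClosed

variable {U : Finset A[X]}

lemma signMatch (hU : CohenHormanderClosed (U : Set A[X]))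
    (hK : PolynomialIVT K) (hL : PolynomialIVT L)
    (hlc : ∀ q ∈ U, SignType.sign (φ q.leadingCoeff) = SignType.sign (ψ q.leadingCoeff))
    (hab : a < b) (hab' : a' < b') (ha : ∀ q ∈ U, signAt φ q a = signAt ψ q a')
    (hb : ∀ q ∈ U, signAt φ q b = signAt ψ q b') : SignMatch φ ψ U a b a' b' := by
  classical
  have hlc0 (q) (hq : q ∈ U) : φ q.leadingCoeff = 0 ↔ ψ q.leadingCoeff = 0 := by
    rw [← sign_eq_zero_iff, hlc q hq, sign_eq_zero_iff]
  suffices h : ∀ F ⊆ U, (∀ p ∈ F, ∀ q ∈ U, q.natDegree < p.natDegree → q ∈ F) →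
      SignMatch φ ψ (F : Set A[X]) a b a' b' from h U subset_rfl fun _ _ _ hq _ ↦ hq
  intro F
  induction F using Finset.induction_on_max_value (fun q : A[X] ↦ q.natDegree) with
  | empty => exact fun _ _ ↦ .single hab hab' (by simp)
  | insert p F hpF hmax ih =>
    intro hFU hlow
    obtain ⟨hpU, hFU⟩ := Finset.insert_subset_iff.1 hFU
    replace hlow (q) (hq : q ∈ U) (hqp : q.natDegree < p.natDegree) : q ∈ F :=
      Finset.mem_of_mem_insert_of_ne (hlow p (Finset.mem_insert_self p F) q hq hqp)
        (by rintro rfl; exact hqp.false)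
    replace ih := ih hFU fun p' hp' q hq hqp ↦ hlow q hq (hqp.trans_le (hmax p' hp'))
    rw [Finset.coe_insert]
    rcases Nat.eq_zero_or_pos p.natDegree with hdeg | hdeg
    · refine ih.insert_of_forall fun x y _ ↦ ?_
      have := hlc p hpU
      rw [leadingCoeff, hdeg] at this
      rw [eq_C_of_natDegree_eq_zero hdeg, signAt, signAt, map_C, map_C, eval_C, eval_C, this]
    obtain ⟨hder, hlead, -⟩ := hU p hpU p hpU hdeg le_rfl
    by_cases hp : φ p.leadingCoeff = 0
    · refine ih.insert_of_forall fun x y h ↦ ?_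
      rw [← signAt_eraseLead hp, ← signAt_eraseLead ((hlc0 p hpU).1 hp)]
      exact h _ (hlow _ hlead (natDegree_eraseLead_lt_of_pos hdeg))
    · refine ih.insert hK hL hp hdeg (hlow _ hder (natDegree_derivative_lt hdeg.ne'))
        (fun q hq ↦ (hlc0 q (hFU hq)).not.1) (fun q hq hq1 ↦ ?_) (ha p hpU) (hb p hpU)
      obtain ⟨-, -, r, hrU, hrq, hr⟩ := hU p hpU q (hFU hq) hq1 (hmax q hq)
      exact ⟨r, hlow r hrU (hrq.trans_le (hmax q hq)), hr⟩

lemma exists_forall_signAt_eq (hU : CohenHormanderClosed (U : Set A[X]))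
    (hK : PolynomialIVT K) (hL : PolynomialIVT L)
    (hlc : ∀ q ∈ U, SignType.sign (φ q.leadingCoeff) = SignType.sign (ψ q.leadingCoeff)) (x : K) :
    ∃ y : L, ∀ q ∈ U, signAt φ q x = signAt ψ q y := by
  have hends (q) (hq : q ∈ U) := hU.natDegree_map_eq_and_sign_leadingCoeff_map_eq hlc hq
  have hB := (Filter.eventually_all_finset U).2 fun q _ ↦
    (eventually_sign_eval_atTop (q.map φ)).and (eventually_sign_eval_neg_atTop (q.map φ))
  have hB' := (Filter.eventually_all_finset U).2 fun q _ ↦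
    (eventually_sign_eval_atTop (q.map ψ)).and (eventually_sign_eval_neg_atTop (q.map ψ))
  obtain ⟨B, hB, hBx⟩ := (hB.and (Filter.eventually_gt_atTop |x|)).exists
  obtain ⟨B', hB', hB'0⟩ := (hB'.and (Filter.eventually_gt_atTop 0)).exists
  have hB0 := (abs_nonneg x).trans_lt hBx
  refine (hU.signMatch hK hL hlc (neg_lt_self hB0) (neg_lt_self hB'0) (fun q hq ↦ ?_)
    fun q hq ↦ ?_).exists_forall_signAt_eq (abs_lt.1 hBx)
  · rw [signAt, signAt, (hB q hq).2, (hB' q hq).2, (hends q hq).1, (hends q hq).2]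
  · rw [signAt, signAt, (hB q hq).1, (hB' q hq).1, (hends q hq).2]

end CohenHormanderClosed

end SignTransfer

section ArtinLang

open Polynomial

lemma ringHom_apply_eq_eval_optionEquivLeft {σ R S : Type*} [CommRing R] [CommRing S]
    (φ : MvPolynomial (Option σ) R →+* S) (s : MvPolynomial (Option σ) R) :
    φ s = ((MvPolynomial.optionEquivLeft R σ s).map
      (φ.comp (MvPolynomial.rename some).toRingHom)).eval (φ (MvPolynomial.X none)) := by
  suffices h : φ = ((Polynomial.evalRingHom (φ (MvPolynomial.X none))).comp
      (Polynomial.mapRingHom (φ.comp (MvPolynomial.rename some).toRingHom))).comp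
      (MvPolynomial.optionEquivLeft R σ : _ →+* _) from DFunLike.congr_fun h s
  refine MvPolynomial.ringHom_ext (fun r ↦ by simp) fun i ↦ ?_
  cases i <;> simp

theorem artin_lang {K L : Type*} [Field K] [LinearOrder K] [IsStrictOrderedRing K]
    [Field L] [LinearOrder L] [IsStrictOrderedRing L] (hK : PolynomialIVT K) (hL : PolynomialIVT L)
    {σ : Type*} [Finite σ] (φ : MvPolynomial σ L →+* K) {S : Set (MvPolynomial σ L)}
    (hS : S.Finite) : ∃ a : σ → L, ∀ s ∈ S, SignType.sign (φ s) = SignType.sign (s.eval a) := by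
  induction σ using Finite.induction_empty_option with
  | of_equiv e ih =>
    obtain ⟨a, ha⟩ := ih (φ.comp (MvPolynomial.rename e).toRingHom)
      (hS.image (MvPolynomial.rename e.symm))
    refine ⟨a ∘ e.symm, fun s hs ↦ ?_⟩
    simpa [MvPolynomial.eval_rename, MvPolynomial.rename_rename] using ha _ ⟨s, hs, rfl⟩
  | h_empty =>
    refine ⟨PEmpty.elim, fun s _ ↦ ?_⟩
    obtain ⟨c, rfl⟩ := MvPolynomial.C_surjective PEmpty s
    rw [MvPolynomial.eval_C]
    exact hL.sign_map (φ.comp MvPolynomial.C) c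
  | @h_option σ _ ih =>
    obtain ⟨U, hSU, hU⟩ := exists_finset_cohenHormanderClosed
      (hS.image (MvPolynomial.optionEquivLeft L σ))
    obtain ⟨a, ha⟩ := ih (φ.comp (MvPolynomial.rename some).toRingHom)
      (U.finite_toSet.image leadingCoeff)
    obtain ⟨y, hy⟩ := hU.exists_forall_signAt_eq (ψ := MvPolynomial.eval a) hK hL
      (fun q hq ↦ ha _ ⟨q, hq, rfl⟩) (φ (MvPolynomial.X none))
    let a' : Option σ → L := fun i ↦ i.elim y a
    have ha' : (MvPolynomial.eval a').comp (MvPolynomial.rename some).toRingHom =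
        MvPolynomial.eval a :=
      MvPolynomial.ringHom_ext (by simp) (by simp [a'])
    refine ⟨a', fun s hs ↦ ?_⟩
    have := hy _ (hSU ⟨s, hs, rfl⟩)
    rw [ringHom_apply_eq_eval_optionEquivLeft φ s,
      ringHom_apply_eq_eval_optionEquivLeft (MvPolynomial.eval a') s, ha', MvPolynomial.eval_X]
    exact this

end ArtinLang

section RealClosure

open Polynomial

universe u

section Semireal

lemma isSumSq_map {R S : Type*} [NonAssocSemiring R] [NonAssocSemiring S] (f : R →+* S) {s : R}
    (hs : IsSumSq s) : IsSumSq (f s) := by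
  induction hs with
  | zero => rw [map_zero]; exact .zero
  | sq_add a _ ih => rw [map_add, map_mul]; exact .sq_add _ ih

lemma isSemireal_of_ringHom {R S : Type*} [NonAssocRing R] [NonAssocRing S] [IsSemireal S]
    (f : R →+* S) : IsSemireal R :=
  ⟨fun hs h ↦ IsSemireal.one_add_ne_zero (isSumSq_map f hs)
    (by rw [← map_one f, ← map_add, h, map_zero])⟩

lemma isSumSq_inv {K : Type*} [Semifield K] {s : K} (hs : IsSumSq s) : IsSumSq s⁻¹ := by
  rcases eq_or_ne s 0 with rfl | h0
  · rw [_root_.inv_zero]; exact .zero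
  · have h : s⁻¹ = s * (s⁻¹ * s⁻¹) := by field_simp
    rw [h]
    exact hs.mul (.mul_self _)

lemma exists_isSumSq_of_mem_iSup {F Ω : Type*} [Field F] [Field Ω] [Algebra F Ω] {ι : Type*}
    [Nonempty ι] {E : ι → IntermediateField F Ω} (hE : Directed (· ≤ ·) E)
    {x : ↥(⨆ i, E i)} (hx : IsSumSq x) : ∃ (i : ι) (y : E i), IsSumSq y ∧ (y : Ω) = x := by
  induction hx with
  | zero => exact ⟨Classical.arbitrary ι, 0, .zero, rfl⟩
  | @sq_add a s _ ih =>
    obtain ⟨i, y, hy, hys⟩ := ih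
    have ha : (a : Ω) ∈ ((⨆ i, E i : IntermediateField F Ω) : Set Ω) := a.2
    rw [IntermediateField.coe_iSup_of_directed hE] at ha
    obtain ⟨j, haj⟩ := Set.mem_iUnion.1 ha
    obtain ⟨k, hik, hjk⟩ := hE i j
    let a' : E k := ⟨a, hjk haj⟩
    have hy' : IsSumSq (IntermediateField.inclusion hik y) :=
      isSumSq_map (IntermediateField.inclusion hik : E i →+* E k) hy
    refine ⟨k, a' * a' + IntermediateField.inclusion hik y, .sq_add a' hy', ?_⟩
    simp [a', hys]

lemma isSemireal_iSup_of_directed {F Ω : Type*} [Field F] [Field Ω] [Algebra F Ω] {ι : Type*}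
    [Nonempty ι] {E : ι → IntermediateField F Ω} (hE : Directed (· ≤ ·) E)
    (h : ∀ i, IsSemireal (E i)) : IsSemireal ↥(⨆ i, E i) := by
  refine ⟨fun {s} hs h1 ↦ ?_⟩
  obtain ⟨i, y, hy, hys⟩ := exists_isSumSq_of_mem_iSup hE hs
  refine (h i).one_add_ne_zero hy (Subtype.ext ?_)
  have h2 := congrArg Subtype.val h1
  push_cast at h2 ⊢
  rwa [hys]

end Semireal

/-- A semireal field is maximal when it has no proper algebraic extension that is semireal; these
are the real closed fields, described without reference to an ordering. -/
def IsMaximalSemireal (K : Type u) [Field K] : Prop :=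
  IsSemireal K ∧ ∀ (L : Type u) [Field L] [Algebra K L] [Algebra.IsAlgebraic K L],
    IsSemireal L → Function.Surjective (algebraMap K L)

lemma exists_isMaximalSemireal (F : Type u) [Field F] [IsSemireal F] :
    ∃ (K : Type u) (_ : Field K), Nonempty (F →+* K) ∧ IsMaximalSemireal K := by
  let Ω := AlgebraicClosure F
  have : IsSemireal (⊥ : IntermediateField F Ω) :=
    isSemireal_of_ringHom (IntermediateField.botEquiv F Ω : _ →+* F)
  obtain ⟨E, -, hE⟩ := zorn_le_nonempty₀ {E : IntermediateField F Ω | IsSemireal E}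
    (fun c hc hchain E₀ hE₀ ↦ by
      have : Nonempty c := ⟨⟨E₀, hE₀⟩⟩
      exact ⟨⨆ i : c, (i : IntermediateField F Ω),
        isSemireal_iSup_of_directed hchain.directed fun i ↦ hc i.2,
        fun E hE ↦ le_iSup (fun i : c ↦ (i : IntermediateField F Ω)) ⟨E, hE⟩⟩) ⊥ this
  refine ⟨E, inferInstance, ⟨algebraMap F E⟩, hE.1, fun L _ _ _ hL x ↦ ?_⟩
  let σ : L →ₐ[E] Ω := IsAlgClosed.lift
  have hσ : IsSemireal (σ.fieldRange.restrictScalars F) :=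
    isSemireal_of_ringHom ((AlgEquiv.ofInjectiveField σ).symm : σ.range →+* L)
  have hle : σ.fieldRange.restrictScalars F ≤ E :=
    hE.2 hσ fun y hy ↦ σ.fieldRange.algebraMap_mem ⟨y, hy⟩
  have hx : σ x ∈ E := hle (AlgHom.mem_fieldRange.2 ⟨x, rfl⟩)
  exact ⟨⟨σ x, hx⟩, σ.injective (σ.commutes ⟨σ x, hx⟩)⟩

section Squares

lemma exists_re_eq_add_mul_of_isSumSq {R : Type*} [CommRing R] {c : R} {x : QuadraticAlgebra R c 0}
    (hx : IsSumSq x) : ∃ s t : R, IsSumSq s ∧ IsSumSq t ∧ x.re = s + c * t := by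
  induction hx with
  | zero => exact ⟨0, 0, .zero, .zero, by simp⟩
  | sq_add a _ ih =>
    obtain ⟨s, t, hs, ht, h⟩ := ih
    refine ⟨a.re * a.re + s, a.im * a.im + t, .sq_add _ hs, .sq_add _ ht, ?_⟩
    rw [QuadraticAlgebra.re_add, QuadraticAlgebra.re_mul, h]
    ring

namespace IsMaximalSemireal

variable {K : Type u} [Field K]

lemma isSumSq_neg (hK : IsMaximalSemireal K) {c : K} (hc : ¬ IsSquare c) : IsSumSq (-c) := by
  have := hK.1
  have : Fact (∀ r : K, r ^ 2 ≠ c + 0 * r) :=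
    ⟨fun r hr ↦ hc ⟨r, by linear_combination -hr⟩⟩
  have hL : ¬ IsSemireal (QuadraticAlgebra K c 0) := fun hL ↦ by
    obtain ⟨y, hy⟩ := hK.2 _ hL ⟨0, 1⟩
    simpa using congrArg QuadraticAlgebra.im hy
  rw [isSemireal_iff_not_isSumSq_neg_one, not_not] at hL
  obtain ⟨s, t, hs, ht, h⟩ := exists_re_eq_add_mul_of_isSumSq hL
  replace h : 1 + s + c * t = 0 := by
    rw [QuadraticAlgebra.re_neg, QuadraticAlgebra.re_one] at h
    linear_combination -h
  have ht0 : t ≠ 0 := by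
    rintro rfl
    exact IsSemireal.one_add_ne_zero hs (by rwa [mul_zero, add_zero] at h)
  have hc' : -c = (1 + s) * t⁻¹ := by
    field_simp
    linear_combination -h
  rw [hc']
  exact (IsSumSq.one.add hs).mul (isSumSq_inv ht)

lemma isSquare_of_isSumSq (hK : IsMaximalSemireal K) {s : K} (hs : IsSumSq s) : IsSquare s := by
  by_contra hsq
  have := hK.1
  have hs0 : s ≠ 0 := by rintro rfl; exact hsq .zero
  refine IsSemireal.one_add_ne_zero ((hK.isSumSq_neg hsq).mul (isSumSq_inv hs)) ?_
  field_simp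
  ring

/-- The nonnegative cone of the unique field ordering of `K`. -/
def squareCone (hK : IsMaximalSemireal K) : RingCone K where
  carrier := {c | IsSquare c}
  mul_mem' := IsSquare.mul
  one_mem' := .one
  zero_mem' := .zero
  add_mem' ha hb := hK.isSquare_of_isSumSq (ha.isSumSq.add hb.isSumSq)
  eq_zero_of_mem_of_neg_mem' {a} ha hna := by
    have := hK.1
    by_contra ha0
    refine IsSemireal.one_add_ne_zero (hna.isSumSq.mul (isSumSq_inv ha.isSumSq)) ?_
    field_simp
    ring

lemma hasMemOrNegMem_squareCone (hK : IsMaximalSemireal K) : HasMemOrNegMem hK.squareCone :=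
  ⟨fun _ ↦ or_iff_not_imp_left.2 fun hc ↦ hK.isSquare_of_isSumSq (hK.isSumSq_neg hc)⟩

end IsMaximalSemireal

end Squares

section SignChange

lemma exists_irreducible_dvd_eval_mul_eval_neg {K : Type*} [Field K] [LinearOrder K]
    [IsStrictOrderedRing K] {a b : K} (p : K[X]) (hp : p.eval a * p.eval b < 0) :
    ∃ q, Irreducible q ∧ q ∣ p ∧ q.eval a * q.eval b < 0 := by
  induction p using WfDvdMonoid.induction_on_irreducible with
  | zero => simp at hp
  | unit u hu =>
    obtain ⟨r, -, rfl⟩ := isUnit_iff.1 hu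
    rw [eval_C, eval_C] at hp
    exact absurd hp (mul_self_nonneg r).not_gt
  | mul f q _ hq ih =>
    rw [eval_mul, eval_mul, mul_mul_mul_comm] at hp
    rcases mul_neg_iff.1 hp with ⟨-, hf⟩ | ⟨hq', -⟩
    · obtain ⟨r, hr, hrf, h⟩ := ih hf
      exact ⟨r, hr, hrf.mul_left q, h⟩
    · exact ⟨q, hq, dvd_mul_right q f, hq'⟩

lemma exists_isSumSq_natDegree_le_mk_eq {K : Type*} [Field K] {p : K[X]} (hp : 0 < p.natDegree)
    {x : AdjoinRoot p} (hx : IsSumSq x) :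
    ∃ s : K[X], IsSumSq s ∧ s.natDegree ≤ 2 * (p.natDegree - 1) ∧ AdjoinRoot.mk p s = x := by
  induction hx with
  | zero => exact ⟨0, .zero, by simp, map_zero _⟩
  | sq_add a _ ih =>
    obtain ⟨s, hs, hdeg, rfl⟩ := ih
    obtain ⟨f, rfl⟩ := AdjoinRoot.mk_surjective a
    have hf : (f % p).natDegree ≤ p.natDegree - 1 :=
      Nat.le_sub_one_of_lt (natDegree_mod_lt f hp.ne')
    have hmk : AdjoinRoot.mk p (f % p) = AdjoinRoot.mk p f :=
      AdjoinRoot.mk_eq_mk.2 ⟨-(f / p), by linear_combination EuclideanDomain.div_add_mod f p⟩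
    refine ⟨f % p * (f % p) + s, .sq_add _ hs, ?_, by rw [map_add, map_mul, hmk]⟩
    refine natDegree_add_le_of_degree_le (natDegree_mul_le.trans ?_) hdeg
    lia

lemma isSemireal_adjoinRoot_of_eval_mul_eval_neg {K : Type*} [Field K] [LinearOrder K]
    [IsStrictOrderedRing K] {a b : K} (p : K[X]) (hirr : Irreducible p)
    (hp : p.eval a * p.eval b < 0) : IsSemireal (AdjoinRoot p) := by
  induction hn : p.natDegree using Nat.strong_induction_on generalizing p with
  | _ n ih =>
  subst hn
  rw [isSemireal_iff_not_isSumSq_neg_one]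
  intro hsq
  obtain ⟨s, hs, hdeg, hmk⟩ := exists_isSumSq_natDegree_le_mk_eq hirr.natDegree_pos hsq
  obtain ⟨q, hpq⟩ : p ∣ 1 + s := by
    rw [← AdjoinRoot.mk_eq_zero, map_add, map_one, hmk, add_neg_cancel]
  have hpos (x : K) : 0 < p.eval x * q.eval x := by
    rw [← eval_mul, ← hpq, eval_add, eval_one]
    exact add_pos_of_pos_of_nonneg one_pos (isSumSq_map (evalRingHom x) hs).nonneg
  have hq0 : q ≠ 0 := by
    rintro rfl
    simpa using hpos a
  have hqp : q.natDegree < p.natDegree := by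
    have h1 : (1 + s).natDegree ≤ 2 * (p.natDegree - 1) :=
      natDegree_add_le_of_degree_le (by simp) hdeg
    rw [hpq, natDegree_mul hirr.ne_zero hq0] at h1
    have := hirr.natDegree_pos
    lia
  have hq : q.eval a * q.eval b < 0 := by
    have h := mul_pos (hpos a) (hpos b)
    rw [mul_mul_mul_comm] at h
    exact (neg_iff_neg_of_mul_pos h).1 hp
  obtain ⟨r, hr, hrq, hrab⟩ := exists_irreducible_dvd_eval_mul_eval_neg q hq
  have := ih r.natDegree ((natDegree_le_of_dvd hrq hq0).trans_lt hqp) r hr hrab rfl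
  refine IsSemireal.one_add_ne_zero (isSumSq_map (AdjoinRoot.mk r) hs) ?_
  rw [← map_one (AdjoinRoot.mk r), ← map_add, AdjoinRoot.mk_eq_zero, hpq]
  exact hrq.mul_left p

lemma mem_Ioo_of_irreducible_of_eval_eq_zero {K : Type*} [Field K] [LinearOrder K]
    [IsStrictOrderedRing K] {p : K[X]} (hirr : Irreducible p) {a b c : K} (hab : a < b)
    (hp : p.eval a * p.eval b < 0) (hc : p.eval c = 0) : c ∈ Set.Ioo a b := by
  obtain ⟨q, rfl⟩ := dvd_iff_isRoot.2 hc
  obtain ⟨u, -, rfl⟩ := isUnit_iff.1 ((hirr.isUnit_or_isUnit rfl).resolve_left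
    (not_isUnit_X_sub_C c))
  simp only [eval_mul, eval_sub, eval_X, eval_C] at hp
  have h : (a - c) * (b - c) < 0 := by
    rw [mul_mul_mul_comm] at hp
    exact neg_of_mul_neg_left hp (mul_self_nonneg u)
  rcases mul_neg_iff.1 h with ⟨h1, h2⟩ | ⟨h1, h2⟩ <;> constructor <;> linarith

end SignChange

theorem IsMaximalSemireal.polynomialIVT {K : Type u} [Field K] [LinearOrder K]
    [IsStrictOrderedRing K] (hK : IsMaximalSemireal K) : PolynomialIVT K := by
  intro p a b hab hp
  obtain ⟨q, hirr, ⟨r, rfl⟩, hq⟩ := exists_irreducible_dvd_eval_mul_eval_neg p hp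
  have : Fact (Irreducible q) := ⟨hirr⟩
  have : FiniteDimensional K (AdjoinRoot q) := (AdjoinRoot.powerBasis hirr.ne_zero).finite
  obtain ⟨c, hc⟩ := hK.2 _ (isSemireal_adjoinRoot_of_eval_mul_eval_neg q hirr hq)
    (AdjoinRoot.root q)
  have hc0 : q.eval c = 0 := by
    apply (algebraMap K (AdjoinRoot q)).injective
    rw [← aeval_algebraMap_apply_eq_algebraMap_eval, hc, map_zero, AdjoinRoot.aeval_eq,
      AdjoinRoot.mk_self]
  exact ⟨c, mem_Ioo_of_irreducible_of_eval_eq_zero hirr hab hq hc0, by rw [eval_mul, hc0, zero_mul]⟩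

theorem exists_polynomialIVT_extension (F : Type u) [Field F] [IsSemireal F] :
    ∃ (K : Type u) (_ : Field K) (_ : LinearOrder K) (_ : IsStrictOrderedRing K),
      Nonempty (F →+* K) ∧ PolynomialIVT K := by
  classical
  obtain ⟨K, _, hFK, hK⟩ := exists_isMaximalSemireal F
  have := hK.hasMemOrNegMem_squareCone
  let : LinearOrder K := .mkOfAddGroupCone hK.squareCone
  have : IsOrderedRing K := .mkOfCone hK.squareCone
  exact ⟨K, _, _, IsOrderedRing.toIsStrictOrderedRing K, hFK, hK.polynomialIVT⟩

end RealClosure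

section RealNullstellensatz

lemma exists_mul_self_mul_eq_algebraMap_of_isSumSq {D K : Type*} [CommRing D] [IsDomain D]
    [Field K] [Algebra D K] [IsFractionRing D K] {s : K} (hs : IsSumSq s) :
    ∃ (d t : D), d ≠ 0 ∧ IsSumSq t ∧ algebraMap D K (d * d) * s = algebraMap D K t := by
  induction hs with
  | zero => exact ⟨1, 0, one_ne_zero, .zero, by simp⟩
  | sq_add x _ ih =>
    obtain ⟨d, t, hd, ht, h⟩ := ih
    obtain ⟨u, v, hv, rfl⟩ := IsFractionRing.div_surjective (A := D) x
    have hv0 : v ≠ 0 := nonZeroDivisors.ne_zero hv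
    have hv0' : algebraMap D K v ≠ 0 := IsFractionRing.to_map_ne_zero_of_mem_nonZeroDivisors hv
    refine ⟨d * v, d * u * (d * u) + v * v * t, mul_ne_zero hd hv0,
      .sq_add _ ((IsSumSq.mul_self v).mul ht), ?_⟩
    simp only [map_add, map_mul, ← h]
    field_simp

lemma isSemireal_of_isFractionRing (D K : Type*) [CommRing D] [IsDomain D] [IsFormallyReal D]
    [Field K] [Algebra D K] [IsFractionRing D K] : IsSemireal K := by
  rw [isSemireal_iff_not_isSumSq_neg_one]
  intro h
  obtain ⟨d, t, hd, ht, hdt⟩ := exists_mul_self_mul_eq_algebraMap_of_isSumSq (D := D) h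
  have hsum : d * d + t = 0 := by
    apply FaithfulSMul.algebraMap_injective D K
    rw [map_add, ← hdt, map_zero]
    ring
  exact hd (mul_self_eq_zero.1 (IsFormallyReal.eq_zero_of_add_right (.mul_self d) ht hsum))

/- A real closed field containing the residue field of `p` has a generic zero of `p` outside the
hypersurface `g = 0`; the Artin–Lang theorem moves it to `L`. -/
theorem exists_eval_eq_zero_and_eval_ne_zero_of_isFormallyReal {L : Type*} [Field L] [LinearOrder L]
    [IsStrictOrderedRing L] (hL : PolynomialIVT L) {σ : Type*} [Finite σ]
    {p : Ideal (MvPolynomial σ L)} [p.IsPrime] [IsFormallyReal (MvPolynomial σ L ⧸ p)]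
    {g : MvPolynomial σ L} (hg : g ∉ p) :
    ∃ x : σ → L, (∀ f ∈ p, f.eval x = 0) ∧ g.eval x ≠ 0 := by
  have : IsSemireal (FractionRing (MvPolynomial σ L ⧸ p)) :=
    isSemireal_of_isFractionRing (MvPolynomial σ L ⧸ p) _
  obtain ⟨K, _, _, _, ⟨j⟩, hK⟩ :=
    exists_polynomialIVT_extension (FractionRing (MvPolynomial σ L ⧸ p))
  let ι : MvPolynomial σ L ⧸ p →+* K := j.comp (algebraMap _ _)
  have hι : Function.Injective ι := j.injective.comp (IsFractionRing.injective _ _)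
  have hφ (f : MvPolynomial σ L) : ι (Ideal.Quotient.mk p f) = 0 ↔ f ∈ p := by
    rw [map_eq_zero_iff ι hι, Ideal.Quotient.eq_zero_iff_mem]
  obtain ⟨S, hS⟩ := IsNoetherian.noetherian p
  obtain ⟨x, hx⟩ := artin_lang hK hL (ι.comp (Ideal.Quotient.mk p))
    (S.finite_toSet.insert g)
  have hzero {s} (hs : s ∈ insert g (S : Set _)) : s.eval x = 0 ↔ s ∈ p := by
    rw [← sign_eq_zero_iff, ← hx s hs, sign_eq_zero_iff]
    exact hφ s
  refine ⟨x, fun f hf ↦ ?_, fun h ↦ hg ((hzero (Set.mem_insert _ _)).1 h)⟩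
  have hle : p ≤ RingHom.ker (MvPolynomial.eval x) := by
    rw [← hS, Submodule.span_le]
    exact fun s hs ↦ (hzero (Set.mem_insert_of_mem _ hs)).2 (hS ▸ Submodule.subset_span hs)
  exact hle hf

end RealNullstellensatz

section RealLeftIdeal

lemma exists_dual_apply_ne_zero {D N : Type*} [CommRing D] [IsDomain D] [AddCommGroup N]
    [Module D N] [Module.Finite D N] {w : N} (hw : ∀ t : D, t ≠ 0 → t • w ≠ 0) :
    ∃ g : N →ₗ[D] D, g w ≠ 0 := by
  let K := FractionRing D
  let V := LocalizedModule (nonZeroDivisors D) N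
  let ι : N →ₗ[D] V := LocalizedModule.mkLinearMap (nonZeroDivisors D) N
  have hιw : ι w ≠ 0 := fun h ↦ by
    obtain ⟨t, ht⟩ := (IsLocalizedModule.eq_zero_iff (nonZeroDivisors D) ι).1 h
    exact hw t (nonZeroDivisors.ne_zero t.2) ht
  obtain ⟨f, hf⟩ := not_forall.1 ((Module.forall_dual_apply_eq_zero_iff K (ι w)).not.2 hιw)
  let F : N →ₗ[D] K := f.restrictScalars D ∘ₗ ι
  have hfg : (LinearMap.range F).FG := Module.Finite.iff_fg.1 inferInstance
  obtain ⟨d, hd, hint⟩ := FractionalIdeal.isFractional_of_fg (S := nonZeroDivisors D) hfg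
  let e := LinearEquiv.ofInjective (Algebra.linearMap D K) (IsFractionRing.injective D K)
  have hint' (x : N) : (d • F) x ∈ LinearMap.range (Algebra.linearMap D K) := hint _ ⟨x, rfl⟩
  let g : N →ₗ[D] D := e.symm ∘ₗ (d • F).codRestrict _ hint'
  have hg (x : N) : algebraMap D K (g x) = d • F x :=
    congrArg Subtype.val (e.apply_symm_apply _)
  refine ⟨g, fun h ↦ ?_⟩
  have hdF := hg w
  rw [h, map_zero] at hdF
  exact (smul_ne_zero (nonZeroDivisors.ne_zero hd) hf) hdF.symm

lemma exists_linearMap_quotient_apply_ne_zero {R M : Type*} [CommRing R] [AddCommGroup M]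
    [Module R M] [Module.Finite R M] {p : Ideal R} [p.IsPrime] {w : M}
    (hw : ∀ t ∉ p, t • w ∉ p • (⊤ : Submodule R M)) : ∃ g : M →ₗ[R] R ⧸ p, g w ≠ 0 := by
  have : Module.Finite (R ⧸ p) (M ⧸ p • (⊤ : Submodule R M)) := .of_restrictScalars_finite R _ _
  obtain ⟨g, hg⟩ := exists_dual_apply_ne_zero (D := R ⧸ p) (w := Submodule.Quotient.mk w)
    (N := M ⧸ p • (⊤ : Submodule R M)) fun t ht ht0 ↦ by
      obtain ⟨t, rfl⟩ := Ideal.Quotient.mk_surjective t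
      refine hw t (fun h ↦ ht (Ideal.Quotient.eq_zero_iff_mem.2 h)) ?_
      exact (Submodule.Quotient.mk_eq_zero _).1 ht0
  exact ⟨g.restrictScalars R ∘ₗ Submodule.mkQ _, hg⟩

lemma exists_sum_mul_self_eq_of_isSumSq {R : Type*} [NonUnitalNonAssocSemiring R] {s : R}
    (hs : IsSumSq s) : ∃ (k : ℕ) (r : Fin k → R), ∑ i, r i * r i = s := by
  induction hs with
  | zero => exact ⟨0, Fin.elim0, Fin.sum_univ_zero _⟩
  | sq_add a _ ih =>
    obtain ⟨k, r, rfl⟩ := ih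
    exact ⟨k + 1, Fin.cons a r, by simp [Fin.sum_univ_succ]⟩

lemma isFormallyReal_of_sum_mul_self {R : Type*} [NonUnitalNonAssocSemiring R]
    (h : ∀ (k : ℕ) (r : Fin k → R), ∑ i, r i * r i = 0 → ∀ i, r i = 0) : IsFormallyReal R := by
  refine .of_eq_zero_of_eq_zero_of_mul_self_add fun {s a} hs hsum ↦ ?_
  obtain ⟨k, r, rfl⟩ := exists_sum_mul_self_eq_of_isSumSq hs
  simpa using h (k + 1) (Fin.cons a r) (by simpa [Fin.sum_univ_succ] using hsum) 0

lemma star_smul_of_star_algebraMap {R B : Type*} [CommSemiring R] [Semiring B] [StarRing B]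
    [Algebra R B] (hstar : ∀ r : R, star (algebraMap R B r) = algebraMap R B r) (r : R) (b : B) :
    star (r • b) = r • star b := by
  rw [Algebra.smul_def, star_mul, hstar, ← Algebra.commutes, ← Algebra.smul_def]

/-- Real left ideals of an arbitrary ring with involution; for a matrix ring with the conjugate
transpose this is `Ideal.IsRealLeftIdealH`. -/
def IsRealLeftIdeal {B : Type*} [Ring B] [StarRing B] (J : Ideal B) : Prop :=
  ∀ (k : ℕ) (b : Fin k → B), (∑ i, star (b i) * b i) ∈ J → ∀ i, b i ∈ J

namespace IsRealLeftIdeal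

variable {B : Type*} [Ring B] [StarRing B] {J : Ideal B}

lemma mem_of_star_mul_self_mem (hJ : IsRealLeftIdeal J) {b : B} (hb : star b * b ∈ J) : b ∈ J :=
  hJ 1 (fun _ ↦ b) (by rwa [Fin.sum_univ_one]) 0

lemma comap {C : Type*} [Ring C] [StarRing C] (hJ : IsRealLeftIdeal J) {f : C →+* B}
    (hf : ∀ c, f (star c) = star (f c)) : IsRealLeftIdeal (J.comap f) := by
  intro k c hc i
  refine hJ k (f ∘ c) ?_ i
  simpa only [Ideal.mem_comap, map_sum, map_mul, hf, Function.comp_apply] using hc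

variable {R : Type*} [CommRing R] [Algebra R B]

lemma isFormallyReal_quotient (hJ : IsRealLeftIdeal J)
    (hstar : ∀ r : R, star (algebraMap R B r) = algebraMap R B r) {p : Ideal R} {w : B}
    (hp : ∀ r, r ∈ p ↔ r • w ∈ J) : IsFormallyReal (R ⧸ p) := by
  refine isFormallyReal_of_sum_mul_self fun k a h i ↦ ?_
  choose r hr using fun i ↦ Ideal.Quotient.mk_surjective (a i)
  obtain rfl : (fun i ↦ Ideal.Quotient.mk p (r i)) = a := funext hr
  have hsum : ∑ i, r i * r i ∈ p := by
    rw [← Ideal.Quotient.eq_zero_iff_mem, ← h, map_sum]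
    simp only [map_mul]
  have hmem : ∑ i, star (r i • w) * (r i • w) ∈ J := by
    simp only [star_smul_of_star_algebraMap hstar, smul_mul_smul_comm, ← mul_smul_comm,
      ← Finset.mul_sum, ← Finset.sum_smul]
    exact J.mul_mem_left _ ((hp _).1 hsum)
  exact Ideal.Quotient.eq_zero_iff_mem.2 ((hp _).2 (hJ k _ hmem i))

lemma star_mul_mem_of_mem_smul_top (hstar : ∀ r : R, star (algebraMap R B r) = algebraMap R B r)
    {p : Ideal R} {w x : B} (hp : ∀ r ∈ p, r • w ∈ J) (hx : x ∈ p • (⊤ : Submodule R B)) :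
    star x * w ∈ J := by
  induction hx using Submodule.smul_induction_on' with
  | smul r hr b _ =>
    rw [star_smul_of_star_algebraMap hstar, smul_mul_assoc, ← mul_smul_comm]
    exact J.mul_mem_left _ (hp r hr)
  | add x _ y _ ihx ihy =>
    rw [star_add, add_mul]
    exact J.add_mem ihx ihy

lemma smul_mem_of_sub_smul_mem (hJ : IsRealLeftIdeal J)
    (hstar : ∀ r : R, star (algebraMap R B r) = algebraMap R B r) {p : Ideal R} {w x : B}
    (hp : ∀ r ∈ p, r • w ∈ J) (hx : x ∈ p • (⊤ : Submodule R B)) {t : R}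
    (ht : x - t • w ∈ J) : t • w ∈ J := by
  have hxw : star x * (t • w) ∈ J := by
    rw [mul_smul_comm]
    exact J.smul_of_tower_mem t (star_mul_mem_of_mem_smul_top hstar hp hx)
  have hxx : star x * x ∈ J := by
    have h : star x * x = star x * (x - t • w) + star x * (t • w) := by rw [mul_sub]; abel
    rw [h]
    exact J.add_mem (J.mul_mem_left _ ht) hxw
  simpa using J.sub_mem (hJ.mem_of_star_mul_self_mem hxx) ht

end IsRealLeftIdeal

lemma exists_isPrime_forall_mem_iff_smul_mem {R M : Type*} [CommRing R] [IsNoetherianRing R]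
    [AddCommGroup M] [Module R M] {N : Submodule R M} {x : M} (hx : x ∉ N) :
    ∃ (p : Ideal R) (s : R), p.IsPrime ∧ ∀ r, r ∈ p ↔ r • s • x ∈ N := by
  let y : M ⧸ N := N.mkQ x
  have hy : y ≠ 0 := fun h ↦ hx ((Submodule.Quotient.mk_eq_zero N).1 h)
  have : Nontrivial (R ∙ y) := Submodule.nontrivial_span_singleton hy
  obtain ⟨p, hp⟩ := associatedPrimes.nonempty R (R ∙ y)
  obtain ⟨hprime, ⟨z, hz⟩, hpz⟩ := isAssociatedPrime_iff.1 hp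
  obtain ⟨s, rfl⟩ := Submodule.mem_span_singleton.1 hz
  refine ⟨p, s, hprime, fun r ↦ ?_⟩
  rw [hpz, Submodule.mem_colon_singleton, Submodule.mem_bot, ← Subtype.coe_inj]
  exact Submodule.Quotient.mk_eq_zero N

/- The prime `p` is the annihilator of the class of some `s • Q` in `B ⧸ J`. Reality of `J` makes
`R ⧸ p` formally real, and it keeps `s • Q` torsion-free modulo `p`: if `t • s • Q` is congruent
modulo `J` to some `x ∈ p • B`, then `star x * x ∈ J`. -/
theorem IsRealLeftIdeal.exists_linearMap_quotient {R B : Type*} [CommRing R] [IsNoetherianRing R]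
    [Ring B] [StarRing B] [Algebra R B] [Module.Finite R B]
    (hstar : ∀ r : R, star (algebraMap R B r) = algebraMap R B r) {J : Ideal B}
    (hJ : IsRealLeftIdeal J) {Q : B} (hQ : Q ∉ J) :
    ∃ p : Ideal R, p.IsPrime ∧ IsFormallyReal (R ⧸ p) ∧
      ∃ g : B →ₗ[R] R ⧸ p, (∀ b ∈ J, g b = 0) ∧ g Q ≠ 0 := by
  obtain ⟨p, s, hprime, hp⟩ := exists_isPrime_forall_mem_iff_smul_mem (R := R)
    (N := J.restrictScalars R) hQ
  have htorsion : ∀ t ∉ p, t • (J.restrictScalars R).mkQ (s • Q) ∉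
      p • (⊤ : Submodule R (B ⧸ J.restrictScalars R)) := by
    intro t ht hmem
    rw [← Submodule.range_mkQ, ← Submodule.map_top, ← Submodule.map_smul''] at hmem
    obtain ⟨x, hx, hxt⟩ := hmem
    rw [← map_smul] at hxt
    exact ht ((hp t).2 (hJ.smul_mem_of_sub_smul_mem hstar (fun r hr ↦ (hp r).1 hr) hx
      ((Submodule.Quotient.eq _).1 hxt)))
  obtain ⟨g, hg⟩ := exists_linearMap_quotient_apply_ne_zero htorsion
  refine ⟨p, hprime, hJ.isFormallyReal_quotient hstar hp, g ∘ₗ Submodule.mkQ _, fun b hb ↦ ?_,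
    fun h ↦ hg ?_⟩
  · have hb0 : (J.restrictScalars R).mkQ b = 0 := (Submodule.Quotient.mk_eq_zero _).2 hb
    rw [LinearMap.comp_apply, hb0, map_zero]
  · rw [map_smul, map_smul, ← LinearMap.comp_apply, h, smul_zero]

end RealLeftIdeal

section RealPoints


/- A functional `B → R ⧸ p` killing `J` but not `Q`, specialised at a real point of `p` where its
value at `Q` does not vanish, separates `Q` from `J` modulo the maximal ideal of that point. -/
theorem IsRealLeftIdeal.exists_notMem_sup_ker_eval_smul_top {L : Type*} [Field L] [LinearOrder L]
    [IsStrictOrderedRing L] (hL : PolynomialIVT L) {σ : Type*} [Finite σ] {B : Type*} [Ring B]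
    [StarRing B] [Algebra (MvPolynomial σ L) B] [Module.Finite (MvPolynomial σ L) B]
    (hstar : ∀ r : MvPolynomial σ L, star (algebraMap _ B r) = algebraMap _ B r) {J : Ideal B}
    (hJ : IsRealLeftIdeal J) {Q : B} (hQ : Q ∉ J) :
    ∃ x : σ → L, Q ∉ J.restrictScalars (MvPolynomial σ L) ⊔
      RingHom.ker (MvPolynomial.eval x) • (⊤ : Submodule (MvPolynomial σ L) B) := by
  obtain ⟨p, _, _, g, hgJ, hgQ⟩ := hJ.exists_linearMap_quotient hstar hQ
  obtain ⟨q, hq⟩ := Ideal.Quotient.mk_surjective (g Q)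
  have hqp : q ∉ p := fun h ↦ hgQ (hq ▸ Ideal.Quotient.eq_zero_iff_mem.2 h)
  obtain ⟨x, hxp, hxq⟩ := exists_eval_eq_zero_and_eval_ne_zero_of_isFormallyReal hL hqp
  let φ : MvPolynomial σ L ⧸ p →+* L := Ideal.Quotient.lift p (MvPolynomial.eval x) hxp
  have hφg {b : B} (hb : b ∈ RingHom.ker (MvPolynomial.eval x) •
      (⊤ : Submodule (MvPolynomial σ L) B)) : φ (g b) = 0 := by
    induction hb using Submodule.smul_induction_on' with
    | smul r hr b _ =>
      have hr0 : φ (algebraMap _ _ r) = 0 := hr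
      rw [map_smul, Algebra.smul_def, map_mul, hr0, zero_mul]
    | add b _ c _ hb hc => rw [map_add, map_add, hb, hc, add_zero]
  refine ⟨x, fun hmem ↦ hxq ?_⟩
  obtain ⟨b, hb, c, hc, rfl⟩ := Submodule.mem_sup.1 hmem
  have hφq : φ (Ideal.Quotient.mk p q) = 0 := by
    rw [hq, map_add, hgJ b hb, zero_add, hφg hc]
  exact hφq

end RealPoints

section VectorAnnihilator

lemma star_dotProduct_self_eq_sum_normSq {ι : Type*} [Fintype ι] (w : ι → ℍ) :
    star w ⬝ᵥ w = algebraMap ℝ ℍ (∑ i, Quaternion.normSq (w i)) := by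
  simp only [dotProduct, Pi.star_apply, Quaternion.star_mul_self, map_sum,
    Quaternion.algebraMap_def]

variable {ι : Type*} [Fintype ι] [DecidableEq ι]

/-- The left ideal of matrices annihilating the vector `v`. -/
def vecAnnihilator {A : Type*} [Ring A] (v : ι → A) : Ideal (Matrix ι ι A) where
  carrier := {M | M *ᵥ v = 0}
  zero_mem' := zero_mulVec v
  add_mem' {M N} hM hN := by
    rw [Set.mem_ofPred_eq] at hM hN ⊢
    rw [add_mulVec, hM, hN, add_zero]
  smul_mem' N M hM := by
    rw [Set.mem_ofPred_eq] at hM ⊢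
    rw [smul_eq_mul, ← mulVec_mulVec, hM, mulVec_zero]

lemma vecMulVec_single_mem_of_mem_span_row {A : Type*} [Ring A] {I : Ideal (Matrix ι ι A)}
    {w : ι → A} (hw : w ∈ Submodule.span A {u | ∃ M ∈ I, ∃ k, u = M.row k}) (i : ι) :
    vecMulVec (Pi.single i 1) w ∈ I := by
  have hscale (c : A) (k : ι) (M : Matrix ι ι A) :
      vecMulVec (Pi.single i 1) (c • M.row k) = single i k c * M := by
    ext r s
    obtain rfl | hr := eq_or_ne r i
    · simp [vecMulVec_apply]
    · simp [vecMulVec_apply, hr]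
  induction hw using Submodule.closure_induction with
  | zero => rw [vecMulVec_zero]; exact I.zero_mem
  | add u v _ _ hu hv => rw [vecMulVec_add]; exact I.add_mem hu hv
  | smul_mem c u hu =>
    obtain ⟨M, hM, k, rfl⟩ := hu
    rw [hscale]
    exact I.mul_mem_left _ hM

/- A left ideal of matrices over a division ring consists of the matrices whose rows lie in a fixed
subspace, so a functional vanishing on that subspace but not on some row of `B` gives `v`. -/
theorem exists_le_vecAnnihilator_and_notMem {D : Type*} [DivisionRing D] {I : Ideal (Matrix ι ι D)}
    {B : Matrix ι ι D} (hB : B ∉ I) :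
    ∃ v : ι → D, I ≤ vecAnnihilator v ∧ B ∉ vecAnnihilator v := by
  let W : Submodule D (ι → D) := Submodule.span D {u | ∃ M ∈ I, ∃ k, u = M.row k}
  obtain ⟨i, hi⟩ : ∃ i, B.row i ∉ W := by
    by_contra! hW
    have hsum : B = ∑ i, vecMulVec (Pi.single i 1) (B.row i) := by
      ext r s
      simp [Matrix.sum_apply, vecMulVec_apply, Pi.single_apply]
    exact hB (hsum ▸ I.sum_mem fun i _ ↦ vecMulVec_single_mem_of_mem_span_row (hW i) i)
  obtain ⟨f, hfB, hfW⟩ := Submodule.exists_le_ker_of_notMem hi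
  let v : ι → D := fun j ↦ f fun k ↦ if j = k then 1 else 0
  have hv (M : Matrix ι ι D) (k : ι) : (M *ᵥ v) k = f (M.row k) :=
    (LinearMap.pi_apply_eq_sum_univ f _).symm
  refine ⟨v, fun M hM ↦ funext fun k ↦ ?_, fun h ↦ hfB ?_⟩
  · rw [hv]
    exact hfW (Submodule.subset_span ⟨M, hM, k, rfl⟩)
  · exact (hv B i).symm.trans (congrFun h i)

lemma isRealLeftIdeal_vecAnnihilator (v : ι → ℍ) :
    IsRealLeftIdeal (vecAnnihilator v) := by
  intro k A hA i
  have hA0 : (∑ i, (A i)ᴴ * A i) *ᵥ v = 0 := hA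
  have hsum : ∑ i, ∑ r, Quaternion.normSq ((A i *ᵥ v) r) = 0 := by
    apply (algebraMap ℝ ℍ).injective
    calc algebraMap ℝ ℍ (∑ i, ∑ r, Quaternion.normSq ((A i *ᵥ v) r))
        = ∑ i, star (A i *ᵥ v) ⬝ᵥ (A i *ᵥ v) := by
          rw [map_sum]
          simp only [star_dotProduct_self_eq_sum_normSq]
      _ = star v ⬝ᵥ ((∑ i, (A i)ᴴ * A i) *ᵥ v) := by
          simp only [sum_mulVec, dotProduct_sum, ← mulVec_mulVec, star_mulVec, dotProduct_mulVec]
      _ = algebraMap ℝ ℍ 0 := by rw [hA0, dotProduct_zero, map_zero]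
  have hrow := (Fintype.sum_eq_zero_iff_of_nonneg fun i ↦
    Finset.sum_nonneg fun r _ ↦ Quaternion.normSq_nonneg).1 hsum
  have hentry := (Fintype.sum_eq_zero_iff_of_nonneg fun r ↦
    Quaternion.normSq_nonneg).1 (congrFun hrow i)
  exact funext fun r ↦ Quaternion.normSq_eq_zero.1 (congrFun hentry r)

end VectorAnnihilator

section QuaternionicPolynomials

/-- The basis `1, i, j, k` of the quaternions, fixing their real coordinates. -/
noncomputable def quatBasis : Module.Basis (Fin 4) ℝ ℍ :=
  QuaternionAlgebra.basisOneIJK (-1) 0 (-1)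

/-- The real coordinates of a point of quaternionic affine space. -/
noncomputable def realCoords {d : ℕ} (a : Fin d → ℍ) : Fin d × Fin 4 → ℝ :=
  fun i ↦ quatBasis.repr (a i.1) i.2

lemma realCoords_surjective (d : ℕ) : Function.Surjective (realCoords (d := d)) := fun x ↦
  ⟨fun i ↦ quatBasis.equivFun.symm fun k ↦ x (i, k), funext fun i ↦ by
    rw [realCoords, ← quatBasis.equivFun_apply, LinearEquiv.apply_symm_apply]⟩

namespace HPoly

variable {d : ℕ}

/-- Constant polynomial functions. -/
noncomputable def const (d : ℕ) : ℍ →+* HPoly d :=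
  (Pi.constRingHom (Fin d → ℍ) ℍ).codRestrict (HPoly d)
    fun c ↦ Subring.subset_closure (.inl ⟨c, rfl⟩)

/-- Coordinate functions. -/
def coord (i : Fin d) : HPoly d :=
  ⟨fun a ↦ a i, Subring.subset_closure (.inr ⟨i, rfl⟩)⟩

/-- Evaluation of polynomial functions at a point. -/
noncomputable def evalHom (a : Fin d → ℍ) : HPoly d →+* ℍ :=
  (Pi.evalRingHom _ a).comp (HPoly d).subtype

@[ext]
lemma ext {f g : HPoly d} (h : ∀ a, evalHom a f = evalHom a g) : f = g :=
  Subtype.ext (funext h)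

@[simp] lemma evalHom_const (a : Fin d → ℍ) (c : ℍ) : evalHom a (const d c) = c := rfl

@[simp] lemma evalHom_coord (a : Fin d → ℍ) (i : Fin d) : evalHom a (coord i) = a i := rfl

@[simp] lemma evalHom_star (a : Fin d → ℍ) (f : HPoly d) :
    evalHom a (star f) = star (evalHom a f) := rfl

lemma exists_evalHom_eq_linearMap (ℓ : ℍ →ₗ[ℝ] ℝ) (f : HPoly d) :
    ∃ g : HPoly d, ∀ a, evalHom a g = (ℓ (evalHom a f) : ℝ) := by
  obtain ⟨c, hc⟩ := (InnerProductSpace.toDual ℝ ℍ).surjective ℓ.toContinuousLinearMap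
  have hℓ (q : ℍ) : ℓ q = (c * star q).re := by
    rw [← Quaternion.inner_def, ← InnerProductSpace.toDual_apply_apply, hc]
    rfl
  refine ⟨const d (2⁻¹ : ℝ) * (const d c * star f + star (const d c * star f)), fun a ↦ ?_⟩
  simp only [map_mul, map_add, evalHom_const, evalHom_star]
  rw [Quaternion.self_add_star', hℓ, ← Quaternion.coe_mul, inv_mul_cancel_left₀ two_ne_zero]

lemma exists_evalHom_eq_eval (r : MvPolynomial (Fin d × Fin 4) ℝ) :
    ∃ f : HPoly d, ∀ a, evalHom a f = (r.eval (realCoords a) : ℝ) := by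
  induction r using MvPolynomial.induction_on with
  | C c => exact ⟨const d c, fun a ↦ by rw [evalHom_const, MvPolynomial.eval_C]⟩
  | add p q hp hq =>
    obtain ⟨⟨f, hf⟩, ⟨g, hg⟩⟩ := And.intro hp hq
    exact ⟨f + g, fun a ↦ by rw [map_add, hf, hg, map_add, Quaternion.coe_add]⟩
  | mul_X p i hp =>
    obtain ⟨f, hf⟩ := hp
    obtain ⟨g, hg⟩ := exists_evalHom_eq_linearMap (quatBasis.coord i.2) (coord i.1)
    refine ⟨f * g, fun a ↦ ?_⟩
    rw [map_mul, hf, hg, map_mul, MvPolynomial.eval_X, Quaternion.coe_mul]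
    rfl

/-- Real polynomials in the `4 * d` real coordinates, as quaternionic polynomial functions. -/
noncomputable def ofRealPoly (d : ℕ) : MvPolynomial (Fin d × Fin 4) ℝ →+* HPoly d :=
  (RingHom.pi fun a ↦ (algebraMap ℝ ℍ).comp (MvPolynomial.eval (realCoords a))).codRestrict
    (HPoly d) fun r ↦ by
      obtain ⟨f, hf⟩ := exists_evalHom_eq_eval r
      convert f.2
      exact (funext hf).symm

noncomputable instance instAlgebra : Algebra (MvPolynomial (Fin d × Fin 4) ℝ) (HPoly d) :=
  (ofRealPoly d).toAlgebra' fun _ _ ↦ Subtype.ext (funext fun _ ↦ Quaternion.coe_commutes _ _)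

lemma evalHom_algebraMap (a : Fin d → ℍ) (r : MvPolynomial (Fin d × Fin 4) ℝ) :
    evalHom a (algebraMap _ _ r) = (r.eval (realCoords a) : ℝ) := rfl

lemma evalHom_smul (a : Fin d → ℍ) (r : MvPolynomial (Fin d × Fin 4) ℝ) (f : HPoly d) :
    evalHom a (r • f) = r.eval (realCoords a) • evalHom a f := by
  rw [Algebra.smul_def, map_mul, evalHom_algebraMap, Quaternion.coe_mul_eq_smul]

lemma star_algebraMap (r : MvPolynomial (Fin d × Fin 4) ℝ) :
    star (algebraMap _ (HPoly d) r) = algebraMap _ _ r := by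
  ext1 a
  rw [evalHom_star, evalHom_algebraMap, Quaternion.star_coe]

lemma const_eq_sum (c : ℍ) :
    const d c = ∑ k, MvPolynomial.C (σ := Fin d × Fin 4) (quatBasis.repr c k) •
      const d (quatBasis k) := by
  ext1 a
  simp only [map_sum, evalHom_smul, evalHom_const, MvPolynomial.eval_C, quatBasis.sum_repr]

lemma coord_eq_sum (i : Fin d) :
    coord i = ∑ k, MvPolynomial.X (R := ℝ) (i, k) • const d (quatBasis k) := by
  ext1 a
  simp only [map_sum, evalHom_smul, evalHom_const, evalHom_coord, MvPolynomial.eval_X, realCoords,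
    quatBasis.sum_repr]

lemma adjoin_range_const :
    Algebra.adjoin (MvPolynomial (Fin d × Fin 4) ℝ) (Set.range (const d)) = ⊤ := by
  rw [eq_top_iff]
  rintro ⟨f, hf⟩ -
  have hconst (c : ℍ) : const d c ∈ Algebra.adjoin (MvPolynomial (Fin d × Fin 4) ℝ)
      (Set.range (const d)) := Algebra.subset_adjoin ⟨c, rfl⟩
  induction hf using Subring.closure_induction with
  | mem f hf =>
    rcases hf with ⟨c, rfl⟩ | ⟨i, rfl⟩
    · exact hconst c
    · change coord i ∈ _
      rw [coord_eq_sum]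
      exact sum_mem fun k _ ↦ Subalgebra.smul_mem _ (hconst _) _
  | zero => exact zero_mem _
  | one => exact one_mem _
  | add f g _ _ hf hg => exact add_mem hf hg
  | neg f _ hf => exact neg_mem hf
  | mul f g _ _ hf hg => exact mul_mem hf hg

lemma span_range_const :
    Submodule.span (MvPolynomial (Fin d × Fin 4) ℝ) (Set.range (const d)) = ⊤ := by
  have hclosure : (Submonoid.closure (Set.range (const d)) : Set (HPoly d)) =
      Set.range (const d) := by
    rw [← RingHom.coe_range]
    exact congrArg _ (Submonoid.closure_eq (const d).range.toSubmonoid)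
  rw [← hclosure, ← Algebra.adjoin_eq_span, adjoin_range_const, Algebra.top_toSubmodule]

instance instModuleFinite : Module.Finite (MvPolynomial (Fin d × Fin 4) ℝ) (HPoly d) := by
  refine ⟨Submodule.fg_def.2 ⟨Set.range fun k ↦ const d (quatBasis k), Set.finite_range _, ?_⟩⟩
  rw [eq_top_iff, ← span_range_const, Submodule.span_le]
  rintro _ ⟨c, rfl⟩
  rw [SetLike.mem_coe, const_eq_sum]
  exact sum_mem fun k _ ↦ Submodule.smul_mem _ _ (Submodule.subset_span ⟨k, rfl⟩)

lemma sub_const_evalHom_mem_ker_eval_smul_top (a : Fin d → ℍ) (f : HPoly d) :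
    f - const d (evalHom a f) ∈ RingHom.ker (MvPolynomial.eval (realCoords a)) •
      (⊤ : Submodule (MvPolynomial (Fin d × Fin 4) ℝ) (HPoly d)) := by
  have hf : f ∈ Submodule.span (MvPolynomial (Fin d × Fin 4) ℝ) (Set.range (const d)) := by
    rw [span_range_const]; trivial
  induction hf using Submodule.span_induction with
  | mem f hf =>
    obtain ⟨c, rfl⟩ := hf
    rw [evalHom_const, sub_self]
    exact zero_mem _
  | zero => simp only [map_zero, sub_self, zero_mem]
  | add f g _ _ hf hg =>
    rw [map_add, map_add, add_sub_add_comm]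
    exact add_mem hf hg
  | smul r f _ hf =>
    have hdiff : r • f - const d (evalHom a (r • f)) =
        (r - MvPolynomial.C (r.eval (realCoords a))) • f +
          MvPolynomial.C (σ := Fin d × Fin 4) (r.eval (realCoords a)) •
            (f - const d (evalHom a f)) := by
      ext1 b
      simp only [map_sub, map_add, evalHom_smul, evalHom_const, MvPolynomial.eval_C, sub_smul,
        smul_sub]
      abel
    rw [hdiff]
    refine add_mem (Submodule.smul_mem_smul ?_ trivial) (Submodule.smul_mem _ _ hf)
    rw [RingHom.mem_ker, map_sub, MvPolynomial.eval_C, sub_self]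

lemma mem_ker_eval_smul_top {a : Fin d → ℍ} {f : HPoly d} (hf : evalHom a f = 0) :
    f ∈ RingHom.ker (MvPolynomial.eval (realCoords a)) •
      (⊤ : Submodule (MvPolynomial (Fin d × Fin 4) ℝ) (HPoly d)) := by
  simpa only [hf, map_zero, sub_zero] using sub_const_evalHom_mem_ker_eval_smul_top a f

end HPoly

end QuaternionicPolynomials

section MatrixPolynomials

variable {d n : ℕ}

/-- `evalMatH` as a ring homomorphism. -/
noncomputable def evalMatHom (a : Fin d → ℍ) :
    Matrix (Fin n) (Fin n) (HPoly d) →+* Matrix (Fin n) (Fin n) ℍ :=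
  (HPoly.evalHom a).mapMatrix

lemma evalMatHom_surjective (a : Fin d → ℍ) : Function.Surjective (evalMatHom (n := n) a) :=
  fun M ↦ ⟨(HPoly.const d).mapMatrix M, rfl⟩

lemma evalMatHom_conjTranspose (a : Fin d → ℍ) (M : Matrix (Fin n) (Fin n) (HPoly d)) :
    evalMatHom a Mᴴ = (evalMatHom a M)ᴴ := rfl

lemma star_algebraMap_matrix (r : MvPolynomial (Fin d × Fin 4) ℝ) :
    star (algebraMap _ (Matrix (Fin n) (Fin n) (HPoly d)) r) = algebraMap _ _ r := by
  rw [algebraMap_eq_diagonal, star_eq_conjTranspose, diagonal_conjTranspose]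
  exact congrArg diagonal (funext fun _ ↦ HPoly.star_algebraMap r)

lemma mem_ker_eval_smul_top_of_evalMatHom_eq_zero {a : Fin d → ℍ}
    {M : Matrix (Fin n) (Fin n) (HPoly d)} (hM : evalMatHom a M = 0) :
    M ∈ RingHom.ker (MvPolynomial.eval (realCoords a)) •
      (⊤ : Submodule (MvPolynomial (Fin d × Fin 4) ℝ) (Matrix (Fin n) (Fin n) (HPoly d))) := by
  rw [matrix_eq_sum_single M]
  refine sum_mem fun i _ ↦ sum_mem fun j _ ↦ ?_
  have hij := Submodule.mem_map_of_mem
    (f := singleLinearMap (MvPolynomial (Fin d × Fin 4) ℝ) (α := HPoly d) i j)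
    (HPoly.mem_ker_eval_smul_top (congrFun₂ hM i j))
  rw [Submodule.map_smul''] at hij
  exact Submodule.smul_mono le_rfl le_top hij

lemma exists_evalMatHom_notMem_map {J : Ideal (Matrix (Fin n) (Fin n) (HPoly d))}
    (hJ : J.IsRealLeftIdealH) {Q : Matrix (Fin n) (Fin n) (HPoly d)} (hQ : Q ∉ J) :
    ∃ a : Fin d → ℍ, evalMatHom a Q ∉ J.map (evalMatHom a) := by
  have : Module.Finite (MvPolynomial (Fin d × Fin 4) ℝ) (Matrix (Fin n) (Fin n) (HPoly d)) :=
    inferInstanceAs (Module.Finite _ (Fin n → Fin n → HPoly d))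
  obtain ⟨x, hx⟩ := IsRealLeftIdeal.exists_notMem_sup_ker_eval_smul_top polynomialIVT_real
    star_algebraMap_matrix (J := J) hJ hQ
  obtain ⟨a, rfl⟩ := realCoords_surjective d x
  refine ⟨a, fun hmem ↦ hx ?_⟩
  obtain ⟨M, hM, hMQ⟩ :=
    (Ideal.mem_map_iff_of_surjective _ (evalMatHom_surjective a)).1 hmem
  rw [← add_sub_cancel M Q]
  refine Submodule.add_mem_sup hM (mem_ker_eval_smul_top_of_evalMatHom_eq_zero ?_)
  rw [map_sub, hMQ, sub_self]

theorem exists_le_comap_vecAnnihilator_and_notMem {J : Ideal (Matrix (Fin n) (Fin n) (HPoly d))}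
    (hJ : J.IsRealLeftIdealH) {Q : Matrix (Fin n) (Fin n) (HPoly d)} (hQ : Q ∉ J) :
    ∃ (a : Fin d → ℍ) (v : Fin n → ℍ),
      J ≤ (vecAnnihilator v).comap (evalMatHom a) ∧ evalMatHom a Q ∉ vecAnnihilator v := by
  obtain ⟨a, ha⟩ := exists_evalMatHom_notMem_map hJ hQ
  obtain ⟨v, hvJ, hvQ⟩ := exists_le_vecAnnihilator_and_notMem ha
  exact ⟨a, v, Ideal.map_le_iff_le_comap.1 hvJ, hvQ⟩

end MatrixPolynomials

theorem matricial_quaternionic_nullstellensatz_general (d n : ℕ) {ι : Type*}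
    (P : ι → Matrix (Fin n) (Fin n) (HPoly d)) (Q : Matrix (Fin n) (Fin n) (HPoly d)) :
    (∀ (a : Fin d → ℍ) (v : Fin n → ℍ),
        (∀ i, (evalMatH a (P i)).mulVec v = 0) → (evalMatH a Q).mulVec v = 0) ↔
      (∀ I : Ideal (Matrix (Fin n) (Fin n) (HPoly d)),
        I.IsRealLeftIdealH → (∀ i, P i ∈ I) → Q ∈ I) := by
  refine ⟨fun hQ J hJ hP ↦ ?_, fun hQ a v hv ↦ ?_⟩
  · by_contra hQJ
    obtain ⟨a, v, hvJ, hvQ⟩ := exists_le_comap_vecAnnihilator_and_notMem hJ hQJ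
    exact hvQ (hQ a v fun i ↦ hvJ (hP i))
  · exact hQ ((vecAnnihilator v).comap (evalMatHom a))
      ((isRealLeftIdeal_vecAnnihilator v).comap (evalMatHom_conjTranspose a)) hv

/-- **Second Matricial Quaternionic Nullstellensatz (Theorem F).** -/
theorem matricial_quaternionic_nullstellensatz (d n m : ℕ)
    (P : Fin m → Matrix (Fin n) (Fin n) (HPoly d)) (Q : Matrix (Fin n) (Fin n) (HPoly d)) :
    (∀ (a : Fin d → ℍ) (v : Fin n → ℍ),
        (∀ i, (evalMatH a (P i)).mulVec v = 0) → (evalMatH a Q).mulVec v = 0) ↔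
      (∀ I : Ideal (Matrix (Fin n) (Fin n) (HPoly d)),
        I.IsRealLeftIdealH → (∀ i, P i ∈ I) → Q ∈ I) :=
  matricial_quaternionic_nullstellensatz_general d n P Q
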